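/- arXiv:2004.14947 — 6 statements merged into one kernel-verified Lean document; each statement's English description precedes it below -/
import Mathlib

section
/- Let v, w be integers with 1 ≤ v < w and gcd(v, w) = 1. If v ≢ w (mod 2), then gcd(p₈(v,w), p₁₂(v,w)) = 1. If v and w are both odd, then 16 ∣ p₈(v,w), 64 ∣ p₁₂(v,w), and gcd(p₈(v,w)/16, p₁₂(v,w)/64) = 1. -/
/-- p₈(v,w) = v⁸ + 14v⁴w⁴ + w⁸. -/
def p8 (v w : ℤ) : ℤ := v ^ 8 + 14 * v ^ 4 * w ^ 4 + w ^ 8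

/-- p₁₂(v,w) = v¹² − 33v⁸w⁴ − 33v⁴w⁸ + w¹². -/
def p12 (v w : ℤ) : ℤ := v ^ 12 - 33 * v ^ 8 * w ^ 4 - 33 * v ^ 4 * w ^ 8 + w ^ 12

lemma aux_odd_prime (v w : ℤ) (hgcd : Int.gcd v w = 1) (q : ℕ) (hq : q.Prime) (h2 : q ≠ 2)
    (h8 : (q : ℤ) ∣ p8 v w) (h12 : (q : ℤ) ∣ p12 v w) : False := by
  have hp : Prime (q : ℤ) := Nat.prime_iff_prime_int.mp hq
  have hnot : ¬ ((q : ℤ) ∣ v ∧ (q : ℤ) ∣ w) := by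
    rintro ⟨ha, hb⟩
    have h := Int.dvd_coe_gcd ha hb
    rw [hgcd] at h
    exact hp.not_isUnit (isUnit_of_dvd_one (by simpa using h))
  have key : (q : ℤ) ∣ 2 ^ 4 * (3 * (v ^ 4 * w ^ 4)) := by
    have hfac : p12 v w = (v ^ 4 + w ^ 4) * (v ^ 8 - 34 * v ^ 4 * w ^ 4 + w ^ 8) := by
      unfold p12; ring
    rw [hfac] at h12
    unfold p8 at h8
    rcases hp.dvd_or_dvd h12 with h | h
    · obtain ⟨c, hc⟩ := h
      obtain ⟨d, hd⟩ := h8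
      exact ⟨4 * (d - c * (v ^ 4 + w ^ 4)), by linear_combination 4 * hd - 4 * (v ^ 4 + w ^ 4) * hc⟩
    · obtain ⟨c, hc⟩ := h
      obtain ⟨d, hd⟩ := h8
      exact ⟨d - c, by linear_combination hd - hc⟩
  rcases hp.dvd_or_dvd key with h | h
  · have := hp.dvd_of_dvd_pow h
    have h' : q ∣ 2 := by exact_mod_cast this
    exact h2 ((Nat.prime_dvd_prime_iff_eq hq Nat.prime_two).mp h')
  rcases hp.dvd_or_dvd h with h | h
  · have h' : q ∣ 3 := by exact_mod_cast h
    have h3 : q = 3 := (Nat.prime_dvd_prime_iff_eq hq Nat.prime_three).mp h'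
    subst h3
    have dec : ∀ x y : ZMod 3, x ^ 8 + 14 * x ^ 4 * y ^ 4 + y ^ 8 = 0 → x = 0 ∧ y = 0 := by
      decide
    have hz := (ZMod.intCast_zmod_eq_zero_iff_dvd (p8 v w) 3).mpr h8
    unfold p8 at hz
    push_cast at hz
    obtain ⟨hv, hw⟩ := dec _ _ hz
    exact hnot ⟨(ZMod.intCast_zmod_eq_zero_iff_dvd v 3).mp hv,
      (ZMod.intCast_zmod_eq_zero_iff_dvd w 3).mp hw⟩
  unfold p8 at h8
  rcases hp.dvd_or_dvd h with h | h
  · have hv := hp.dvd_of_dvd_pow h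
    refine hnot ⟨hv, hp.dvd_of_dvd_pow (n := 8) ?_⟩
    obtain ⟨c, rfl⟩ := hv
    obtain ⟨d, hd⟩ := h8
    exact ⟨d - q ^ 7 * c ^ 8 - 14 * q ^ 3 * c ^ 4 * w ^ 4, by linear_combination hd⟩
  · have hw := hp.dvd_of_dvd_pow h
    refine hnot ⟨hp.dvd_of_dvd_pow (n := 8) ?_, hw⟩
    obtain ⟨c, rfl⟩ := hw
    obtain ⟨d, hd⟩ := h8
    exact ⟨d - q ^ 7 * c ^ 8 - 14 * q ^ 3 * c ^ 4 * v ^ 4, by linear_combination hd⟩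

lemma aux_gcd (v w x y : ℤ) (hgcd : Int.gcd v w = 1) (hx : x ∣ p8 v w) (hy : y ∣ p12 v w)
    (hodd : ¬ (2 : ℤ) ∣ x) : Int.gcd x y = 1 := by
  by_contra hne
  obtain ⟨q, hq, hd⟩ := Nat.exists_prime_and_dvd hne
  have hd' : (q : ℤ) ∣ (Int.gcd x y : ℤ) := by exact_mod_cast hd
  have hqx : (q : ℤ) ∣ x := hd'.trans (Int.gcd_dvd_left ..)
  have hqy : (q : ℤ) ∣ y := hd'.trans (Int.gcd_dvd_right ..)
  refine aux_odd_prime v w hgcd q hq ?_ (hqx.trans hx) (hqy.trans hy)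
  rintro rfl
  exact hodd (by exact_mod_cast hqx)

lemma aux_fourth (v : ℤ) (hv : Odd v) : ∃ k, v ^ 4 = 16 * k + 1 := by
  obtain ⟨n, rfl⟩ := hv
  obtain ⟨m, hm⟩ := Int.even_mul_succ_self n
  exact ⟨4 * m ^ 2 + m, by linear_combination (16 * n ^ 2 + 16 * n + 32 * m + 8) * hm⟩

theorem stmt8 (v w : ℤ) (h1 : 1 ≤ v) (hvw : v < w) (hgcd : Int.gcd v w = 1) :
    (v % 2 ≠ w % 2 → Int.gcd (p8 v w) (p12 v w) = 1) ∧
    (Odd v → Odd w →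
      16 ∣ p8 v w ∧ 64 ∣ p12 v w ∧ Int.gcd (p8 v w / 16) (p12 v w / 64) = 1) := by
  constructor
  · intro hne
    refine aux_gcd v w _ _ hgcd dvd_rfl dvd_rfl ?_
    intro h
    have dec : ∀ x y : ZMod 2, x ^ 8 + 14 * x ^ 4 * y ^ 4 + y ^ 8 = 0 → x = y := by
      decide
    have hz := (ZMod.intCast_zmod_eq_zero_iff_dvd (p8 v w) 2).mpr (by exact_mod_cast h)
    unfold p8 at hz
    push_cast at hz
    have := (ZMod.intCast_eq_intCast_iff' v w 2).mp (dec _ _ hz)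
    exact hne (by exact_mod_cast this)
  · intro hv hw
    obtain ⟨k, hk⟩ := aux_fourth v hv
    obtain ⟨l, hl⟩ := aux_fourth w hw
    have e8 : p8 v w = 16 * (2 * (8 * (k - l) ^ 2 + 128 * k * l + 8 * k + 8 * l) + 1) := by
      have : p8 v w = (v ^ 4 - w ^ 4) ^ 2 + 16 * (v ^ 4 * w ^ 4) := by unfold p8; ring
      rw [this, hk, hl]; ring
    have e12 : p12 v w = 64 * ((8 * k + 8 * l + 1) *
        (8 * (k - l) ^ 2 - (16 * k + 1) * (16 * l + 1))) := by
      have : p12 v w = (v ^ 4 + w ^ 4) * ((v ^ 4 - w ^ 4) ^ 2 - 32 * (v ^ 4 * w ^ 4)) := by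
        unfold p12; ring
      rw [this, hk, hl]; ring
    have d8 : 16 ∣ p8 v w := ⟨_, e8⟩
    have d12 : 64 ∣ p12 v w := ⟨_, e12⟩
    refine ⟨d8, d12, aux_gcd v w _ _ hgcd (Int.ediv_dvd_of_dvd d8) (Int.ediv_dvd_of_dvd d12) ?_⟩
    rw [e8, Int.mul_ediv_cancel_left _ (by norm_num)]
    omega
end

section
/- There is a constant C > 0 such that for all real y ≥ 1 and all (i, j) ∈ {0,1}² with (i, j) ≠ (0, 0): |Σ 1/√p₈(v,w) − (α₃ + α₄)/(8y^{1/4})| ≤ C·y^{−3/8}, where the sum is over integer pairs (v, w) with 0 < v < w, p₈(v,w) > y, v ≡ i (mod 2) and w ≡ j (mod 2). -/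
/-- p₈(v,w) = v⁸ + 14v⁴w⁴ + w⁸, as a real number, for integers v, w. -/
def p8R (v w : ℤ) : ℝ :=
  (v : ℝ) ^ 8 + 14 * (v : ℝ) ^ 4 * (w : ℝ) ^ 4 + (w : ℝ) ^ 8

/-- p₈(u,1) = u⁸ + 14u⁴ + 1 for real u. -/
def p8u (u : ℝ) : ℝ := u ^ 8 + 14 * u ^ 4 + 1

open MeasureTheory Set
open scoped ENNReal

lemma aux_cells {f : ℝ → ℝ≥0∞} (hf : AntitoneOn f (Ici 0)) {d l : ℝ} (hd : 0 ≤ d) (hl : 0 < l)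
    (hl2 : l ≤ 2) :
    ∑' n : ℕ, ENNReal.ofReal l * f (d + 2 * n + l) ≤ ∫⁻ x in Ioi 0, f x := by
  have hdis : Pairwise (Function.onFun Disjoint
      (fun n : ℕ => Ioc (d + 2 * (n:ℝ)) (d + 2 * n + l))) := by
    have key : ∀ m n : ℕ, m < n → Disjoint (Ioc (d + 2 * (m:ℝ)) (d + 2 * m + l))
        (Ioc (d + 2 * (n:ℝ)) (d + 2 * n + l)) := by
      intro m n h
      rw [Set.disjoint_left]
      intro x hx hx'
      have : (m:ℝ) + 1 ≤ n := by exact_mod_cast h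
      linarith [hx.2, hx'.1]
    intro m n h
    rcases lt_or_gt_of_ne h with h | h
    · exact key m n h
    · exact (key n m h).symm
  calc ∑' n : ℕ, ENNReal.ofReal l * f (d + 2 * n + l)
      ≤ ∑' n : ℕ, ∫⁻ x in Ioc (d + 2 * (n:ℝ)) (d + 2 * n + l), f x := by
        refine ENNReal.tsum_le_tsum fun n => ?_
        have h1 : ∫⁻ x in Ioc (d + 2 * (n:ℝ)) (d + 2 * n + l), f (d + 2 * n + l)
            = ENNReal.ofReal l * f (d + 2 * n + l) := by
          rw [setLIntegral_const, Real.volume_Ioc, mul_comm]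
          congr 2; ring
        rw [← h1]
        refine setLIntegral_mono' measurableSet_Ioc fun x hx => ?_
        have : (0:ℝ) ≤ n := Nat.cast_nonneg n
        exact hf (by simp only [mem_Ici]; linarith [hx.1]) (by simp only [mem_Ici]; linarith) hx.2
    _ = ∫⁻ x in ⋃ n : ℕ, Ioc (d + 2 * (n:ℝ)) (d + 2 * n + l), f x :=
        (lintegral_iUnion (fun n => measurableSet_Ioc) hdis f).symm
    _ ≤ _ := by
        refine lintegral_mono_set ?_
        refine iUnion_subset fun n x hx => ?_
        have : (0:ℝ) ≤ n := Nat.cast_nonneg n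
        simp only [mem_Ioi]; linarith [hx.1]

lemma auxC {f : ℝ → ℝ≥0∞} (hf : AntitoneOn f (Ici 0)) {a : ℝ} (ha : 1 ≤ a) :
    ∑' n : ℕ, f (a + 2 * n) ≤ ∫⁻ x in Ioi 0, f x := by
  have := aux_cells hf (d := a - 1) (l := 1) (by linarith) one_pos (by norm_num)
  refine le_trans (le_of_eq ?_) this
  refine tsum_congr fun n => ?_
  rw [ENNReal.ofReal_one, one_mul]; congr 1; ring

lemma auxB {f : ℝ → ℝ≥0∞} (hf : AntitoneOn f (Ici 0)) {a : ℝ} (ha : 1 ≤ a) :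
    2 * ∑' n : ℕ, f (a + 2 * n) ≤ (∫⁻ x in Ioi 0, f x) + 2 * f 0 := by
  have := aux_cells hf (d := a) (l := 2) (by linarith) two_pos le_rfl
  rw [tsum_eq_zero_add' ENNReal.summable, mul_add, add_comm]
  refine add_le_add ?_ ?_
  · refine le_trans (le_of_eq ?_) this
    rw [← ENNReal.tsum_mul_left]
    refine tsum_congr fun n => ?_
    congr 1
    · simp
    · congr 1; push_cast; ring
  · gcongr
    exact hf (by simp) (by simp; linarith) (by simp; linarith)

lemma auxA {f : ℝ → ℝ≥0∞} (hf : AntitoneOn f (Ici 0)) {a : ℝ} (ha : 1 ≤ a) (ha2 : a ≤ 2) :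
    (∫⁻ x in Ioi 0, f x) ≤ 2 * (∑' n : ℕ, f (a + 2 * n)) + 2 * f 0 := by
  have hsub : Ioi (0:ℝ) ⊆ (⋃ n : ℕ, Ioc (a + 2 * (n:ℝ)) (a + 2 * n + 2)) ∪ Ioc 0 2 := by
    intro x hx
    simp only [mem_Ioi] at hx
    by_cases h : x ≤ 2
    · right; exact ⟨hx, h⟩
    · left
      push Not at h
      have hpos : 0 < (x - a) / 2 := by linarith
      have hc := Nat.ceil_lt_add_one hpos.le
      have hc2 := Nat.le_ceil ((x - a) / 2)
      have hc3 := Nat.ceil_pos.2 hpos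
      obtain ⟨k, hk⟩ := Nat.exists_eq_succ_of_ne_zero hc3.ne'
      rw [hk] at hc hc2
      push_cast at hc hc2
      simp only [mem_iUnion]
      exact ⟨k, by linarith, by linarith⟩
  calc (∫⁻ x in Ioi 0, f x) ≤ _ := lintegral_mono_set hsub
    _ ≤ _ := lintegral_union_le _ _ _
    _ ≤ _ := by
      refine add_le_add ?_ ?_
      · rw [← ENNReal.tsum_mul_left]
        refine (lintegral_iUnion_le _ _).trans (ENNReal.tsum_le_tsum fun n => ?_)
        have h1 : ∫⁻ x in Ioc (a + 2 * (n:ℝ)) (a + 2 * n + 2), f (a + 2 * n)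
            = 2 * f (a + 2 * n) := by
          rw [setLIntegral_const, Real.volume_Ioc, mul_comm]
          congr 1
          rw [add_sub_cancel_left]; simp
        rw [← h1]
        refine setLIntegral_mono' measurableSet_Ioc fun x hx => ?_
        have : (0:ℝ) ≤ n := Nat.cast_nonneg n
        exact hf (by simp only [mem_Ici]; linarith) (by simp only [mem_Ici]; linarith [hx.1]) hx.1.le
      · have h1 : ∫⁻ x in Ioc (0:ℝ) 2, f 0 = 2 * f 0 := by
          rw [setLIntegral_const, Real.volume_Ioc, mul_comm]
          simp
        rw [← h1]
        refine setLIntegral_mono' measurableSet_Ioc fun x hx => ?_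
        exact hf (by simp) hx.1.le hx.1.le

/-- Two-dimensional comparison. -/
lemma aux2D {Φ : ℝ → ℝ → ℝ≥0∞}
    (h : ∀ v w v' w', 0 ≤ v → 0 ≤ w → v ≤ v' → w ≤ w' → Φ v' w' ≤ Φ v w)
    {a b : ℝ} (ha : 1 ≤ a) (ha2 : a ≤ 2) (hb : 1 ≤ b) (hb2 : b ≤ 2)
    {S J K : ℝ≥0∞}
    (hS : S = ∑' m : ℕ, ∑' n : ℕ, Φ (a + 2 * m) (a + 2 * m + (b + 2 * n)))
    (hJ : J = ∫⁻ x in Ioi 0, ∫⁻ k in Ioi 0, Φ x (x + k))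
    (hK : (∫⁻ k in Ioi 0, Φ 0 k) ≤ K) :
    4 * S ≤ J + 6 * K ∧ J ≤ 4 * S + 6 * K := by
  set G : ℝ → ℝ≥0∞ := fun x => ∫⁻ k in Ioi 0, Φ x (x + k) with hG
  set R : ℝ → ℝ≥0∞ := fun x => Φ x x with hR
  set s : ℝ → ℝ≥0∞ := fun x => ∑' n : ℕ, Φ x (x + (b + 2 * n)) with hs
  have hGa : AntitoneOn G (Ici 0) := by
    intro x hx y hy hxy
    refine setLIntegral_mono' measurableSet_Ioi fun k hk => ?_
    simp only [mem_Ioi, mem_Ici] at *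
    exact h _ _ _ _ hx (by linarith) hxy (by linarith)
  have hRa : AntitoneOn R (Ici 0) := fun x hx y hy hxy => h _ _ _ _ hx hx hxy hxy
  have hin : ∀ x, 0 ≤ x → AntitoneOn (fun k => Φ x (x + k)) (Ici 0) := by
    intro x hx k hk k' hk' hkk
    simp only [mem_Ici] at *
    exact h _ _ _ _ hx (by linarith) le_rfl (by linarith)
  have hm : ∀ m : ℕ, 0 ≤ a + 2 * (m:ℝ) := fun m => by positivity
  have h1 : ∀ m : ℕ, 2 * s (a + 2 * m) ≤ G (a + 2 * m) + 2 * R (a + 2 * m) := by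
    intro m
    simpa [hs, hG, hR] using auxB (hin _ (hm m)) hb
  have h2 : ∀ m : ℕ, G (a + 2 * m) ≤ 2 * s (a + 2 * m) + 2 * R (a + 2 * m) := by
    intro m
    simpa [hs, hG, hR] using auxA (hin _ (hm m)) hb hb2
  have hS' : S = ∑' m : ℕ, s (a + 2 * m) := hS
  have h1' : 2 * S ≤ ∑' m : ℕ, G (a + 2 * m) + 2 * ∑' m : ℕ, R (a + 2 * m) := by
    rw [hS', ← ENNReal.tsum_mul_left, ← ENNReal.tsum_mul_left, ← ENNReal.tsum_add]
    exact ENNReal.tsum_le_tsum h1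
  have h2' : ∑' m : ℕ, G (a + 2 * m) ≤ 2 * S + 2 * ∑' m : ℕ, R (a + 2 * m) := by
    rw [hS', ← ENNReal.tsum_mul_left, ← ENNReal.tsum_mul_left, ← ENNReal.tsum_add]
    exact ENNReal.tsum_le_tsum h2
  have hRK : ∑' m : ℕ, R (a + 2 * m) ≤ K := by
    refine (auxC hRa ha).trans (le_trans ?_ hK)
    refine setLIntegral_mono' measurableSet_Ioi fun k hk => ?_
    exact h _ _ _ _ le_rfl (le_of_lt hk) (le_of_lt hk) le_rfl
  have hG0 : G 0 ≤ K := by simpa [hG] using hK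
  have h3 := auxB hGa ha
  have h4 := auxA hGa ha ha2
  rw [← hJ] at h3 h4
  constructor
  · calc 4 * S = 2 * (2 * S) := by ring
      _ ≤ 2 * (∑' m : ℕ, G (a + 2 * m) + 2 * K) := by
        gcongr; exact h1'.trans (by gcongr)
      _ = 2 * (∑' m : ℕ, G (a + 2 * m)) + 4 * K := by ring
      _ ≤ (J + 2 * K) + 4 * K := by gcongr; exact h3.trans (by gcongr)
      _ = _ := by ring
  · calc J ≤ 2 * (∑' m : ℕ, G (a + 2 * m)) + 2 * K := h4.trans (by gcongr)
      _ ≤ 2 * (2 * S + 2 * K) + 2 * K := by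
        gcongr; exact h2'.trans (by gcongr)
      _ = _ := by ring

noncomputable def PR (v w : ℝ) : ℝ := v ^ 8 + 14 * v ^ 4 * w ^ 4 + w ^ 8

noncomputable def FF (v w : ℝ) : ℝ≥0∞ := (ENNReal.ofReal (Real.sqrt (PR v w)))⁻¹

noncomputable def Phi (y v w : ℝ) : ℝ≥0∞ := if y < PR v w then FF v w else 0

noncomputable def Phi1 (y v w : ℝ) : ℝ≥0∞ := min (FF v w) (ENNReal.ofReal (Real.sqrt y))⁻¹

noncomputable def Phi2 (y v w : ℝ) : ℝ≥0∞ :=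
  if PR v w ≤ y then (ENNReal.ofReal (Real.sqrt y))⁻¹ else 0

lemma PR_mono {v w v' w' : ℝ} (hv : 0 ≤ v) (hw : 0 ≤ w) (hv' : v ≤ v') (hw' : w ≤ w') :
    PR v w ≤ PR v' w' := by
  unfold PR; gcongr

lemma Phi1_anti (y v w v' w' : ℝ) (hv : 0 ≤ v) (hw : 0 ≤ w) (hv' : v ≤ v') (hw' : w ≤ w') :
    Phi1 y v' w' ≤ Phi1 y v w := by
  have := PR_mono hv hw hv' hw'
  unfold Phi1 FF
  gcongr

lemma Phi2_anti (y v w v' w' : ℝ) (hv : 0 ≤ v) (hw : 0 ≤ w) (hv' : v ≤ v') (hw' : w ≤ w') :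
    Phi2 y v' w' ≤ Phi2 y v w := by
  have := PR_mono hv hw hv' hw'
  unfold Phi2
  split_ifs with h1 h2
  · exact le_rfl
  · exact absurd (this.trans h1) h2
  · exact zero_le
  · exact le_rfl

lemma Phi_add (y v w : ℝ) : Phi1 y v w = Phi y v w + Phi2 y v w := by
  unfold Phi1 Phi Phi2 FF
  by_cases h : y < PR v w
  · rw [if_pos h, if_neg (not_le.2 h), add_zero]
    apply min_eq_left; gcongr
  · rw [if_neg h, if_pos (not_lt.1 h), zero_add]
    push Not at h
    apply min_eq_right; gcongr

lemma PR_meas : Measurable fun p : ℝ × ℝ => PR p.1 p.2 := by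
  unfold PR; fun_prop

lemma Phi_meas (y : ℝ) : Measurable fun p : ℝ × ℝ => Phi y p.1 p.2 := by
  unfold Phi FF
  refine Measurable.ite (measurableSet_lt measurable_const PR_meas) ?_ measurable_const
  exact (PR_meas.sqrt.ennreal_ofReal).inv

lemma lint_rpow {a c : ℝ} (ha : a < -1) (hc : 0 < c) :
    ∫⁻ x in Ioi c, ENNReal.ofReal (x ^ a) = ENNReal.ofReal (-c ^ (a + 1) / (a + 1)) := by
  rw [← integral_Ioi_rpow_of_lt ha hc, ofReal_integral_eq_lintegral_ofReal
    (integrableOn_Ioi_rpow_of_lt ha hc)]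
  filter_upwards [ae_restrict_mem measurableSet_Ioi] with x hx
  exact Real.rpow_nonneg (hc.le.trans (le_of_lt hx)) _

lemma Phi1_K {y : ℝ} (hy : 1 ≤ y) :
    ∫⁻ k in Ioi 0, Phi1 y 0 k ≤ ENNReal.ofReal (4 / 3 * y ^ (-(3:ℝ) / 8)) := by
  have hy0 : 0 < y := by linarith
  set Y := y ^ ((1:ℝ) / 8) with hY
  have hYpos : 0 < Y := by positivity
  have e1 : (Real.sqrt y)⁻¹ * Y = y ^ (-(3:ℝ) / 8) := by
    rw [Real.sqrt_eq_rpow, ← Real.rpow_neg hy0.le, hY, ← Real.rpow_add hy0]; norm_num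
  have e2 : Y ^ (-3:ℝ) = y ^ (-(3:ℝ) / 8) := by
    rw [hY, ← Real.rpow_mul hy0.le]; norm_num
  calc ∫⁻ k in Ioi 0, Phi1 y 0 k = ∫⁻ k in Ioc 0 Y ∪ Ioi Y, Phi1 y 0 k := by
        rw [Ioc_union_Ioi_eq_Ioi hYpos.le]
    _ ≤ (∫⁻ k in Ioc 0 Y, Phi1 y 0 k) + ∫⁻ k in Ioi Y, Phi1 y 0 k := lintegral_union_le _ _ _
    _ ≤ ENNReal.ofReal (y ^ (-(3:ℝ) / 8)) + ENNReal.ofReal (1 / 3 * y ^ (-(3:ℝ) / 8)) := by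
      refine add_le_add ?_ ?_
      · calc _ ≤ ∫⁻ k in Ioc 0 Y, (ENNReal.ofReal (Real.sqrt y))⁻¹ :=
              lintegral_mono fun k => min_le_right _ _
          _ = _ := by
              rw [setLIntegral_const, Real.volume_Ioc, sub_zero,
                ← ENNReal.ofReal_inv_of_pos (Real.sqrt_pos.2 hy0),
                ← ENNReal.ofReal_mul (by positivity), e1]
      · calc _ ≤ ∫⁻ k in Ioi Y, ENNReal.ofReal (k ^ (-4:ℝ)) := by
              refine setLIntegral_mono' measurableSet_Ioi fun k hk => ?_
              have hk0 : 0 < k := hYpos.trans hk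
              refine (min_le_left _ _).trans (le_of_eq ?_)
              have : PR 0 k = (k ^ 4) ^ 2 := by unfold PR; ring
              rw [FF, this, Real.sqrt_sq (by positivity),
                ← ENNReal.ofReal_inv_of_pos (by positivity), Real.rpow_neg hk0.le]
              norm_cast
          _ = _ := by
              rw [lint_rpow (by norm_num) hYpos, ← e2]
              congr 1
              norm_num; ring
    _ = _ := by
      rw [← ENNReal.ofReal_add (by positivity) (by positivity)]; congr 1; ring

lemma inner_int {y Q : ℝ} (hy : 0 < y) (hQ : 0 < Q) :
    ∫⁻ x in Ioi 0, ENNReal.ofReal x * (if y < x ^ 8 * Q then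
      (ENNReal.ofReal (Real.sqrt (x ^ 8 * Q)))⁻¹ else 0)
     = ENNReal.ofReal (y ^ (-(1:ℝ) / 4) / 2 * Q ^ (-(1:ℝ) / 4)) := by
  set X := (y / Q) ^ ((1:ℝ) / 8) with hX
  have hX0 : 0 < X := by positivity
  have hX8 : X ^ 8 * Q = y := by
    rw [hX, ← Real.rpow_natCast, ← Real.rpow_mul (by positivity)]
    norm_num
    field_simp
  have hiff : ∀ x, 0 < x → (y < x ^ 8 * Q ↔ X < x) := by
    intro x hx
    rw [← hX8, mul_lt_mul_iff_left₀ hQ]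
    exact pow_lt_pow_iff_left₀ hX0.le hx.le (by norm_num)
  have h1 : ∀ x ∈ Ioi (0:ℝ), ENNReal.ofReal x * (if y < x ^ 8 * Q then
      (ENNReal.ofReal (Real.sqrt (x ^ 8 * Q)))⁻¹ else 0)
      = (Ioi X).indicator (fun x => ENNReal.ofReal ((Real.sqrt Q)⁻¹) *
        ENNReal.ofReal (x ^ (-3:ℝ))) x := by
    intro x hx
    have hx : 0 < x := hx
    by_cases h : X < x
    · rw [if_pos ((hiff x hx).2 h), indicator_of_mem (by exact h)]
      have : x ^ 8 * Q = (x ^ 4) ^ 2 * Q := by ring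
      have hsq : 0 < Real.sqrt Q := Real.sqrt_pos.2 hQ
      rw [this, Real.sqrt_mul (by positivity), Real.sqrt_sq (by positivity),
        ← ENNReal.ofReal_inv_of_pos (by positivity), ← ENNReal.ofReal_mul hx.le,
        ← ENNReal.ofReal_mul (by positivity), Real.rpow_neg hx.le]
      congr 1
      norm_cast
      field_simp
    · rw [if_neg (fun h' => h ((hiff x hx).1 h')), indicator_of_notMem (by exact h), mul_zero]
  rw [setLIntegral_congr_fun measurableSet_Ioi h1, lintegral_indicator measurableSet_Ioi,
    Measure.restrict_restrict measurableSet_Ioi,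
    inter_eq_left.2 (Ioi_subset_Ioi hX0.le), lintegral_const_mul' _ _ ENNReal.ofReal_ne_top,
    lint_rpow (by norm_num) hX0, ← ENNReal.ofReal_mul (by positivity)]
  congr 1
  have e : X ^ (-2:ℝ) = y ^ (-(1:ℝ) / 4) * Q ^ ((1:ℝ) / 4) := by
    rw [hX, ← Real.rpow_mul (by positivity), Real.div_rpow hy.le hQ.le]
    norm_num
    rw [show (-(1/4):ℝ) = -1/4 by norm_num, show (-1/4:ℝ) = -(1/4) by norm_num,
      Real.rpow_neg hQ.le, div_inv_eq_mul]
  have e3 : (Real.sqrt Q)⁻¹ * Q ^ ((1:ℝ) / 4) = Q ^ (-(1:ℝ) / 4) := by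
    rw [Real.sqrt_eq_rpow, ← Real.rpow_neg hQ.le, ← Real.rpow_add hQ]; norm_num
  rw [show (-3:ℝ) + 1 = -2 by norm_num, e, ← e3]
  ring

lemma scale_int {x : ℝ} (hx : 0 < x) (f : ℝ → ℝ≥0∞) :
    ∫⁻ k in Ioi 0, f k = ∫⁻ s in Ioi 0, ENNReal.ofReal x * f (x * s) := by
  have him : (fun s => x * s) '' Ioi (0:ℝ) = Ioi 0 := by
    rw [image_mul_left_Ioi hx, mul_zero]
  have := lintegral_image_eq_lintegral_abs_deriv_mul (s := Ioi (0:ℝ)) (f := fun s => x * s)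
    (f' := fun _ => x) measurableSet_Ioi
    (fun s _ => by simpa using ((hasDerivAt_id s).const_mul x).hasDerivWithinAt)
    (fun a _ b _ h => mul_left_cancel₀ hx.ne' h) f
  rw [him] at this
  rw [this, abs_of_pos hx]

lemma p8u_ge (u : ℝ) : 1 ≤ p8u u := by
  unfold p8u
  have : 0 ≤ u ^ 8 := by positivity
  have : 0 ≤ u ^ 4 := by positivity
  linarith

lemma p8u_cont : Continuous p8u := by unfold p8u; fun_prop

lemma p8u_rpow_int : IntegrableOn (fun u => p8u u ^ (-(1:ℝ) / 4)) (Ioc 0 1) := by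
  refine (ContinuousOn.integrableOn_Icc ?_).mono_set Ioc_subset_Icc_self
  refine Continuous.continuousOn (p8u_cont.rpow_const fun u => Or.inl ?_)
  have := p8u_ge u; positivity

lemma subst_int :
    ∫⁻ s in Ioi (0:ℝ), ENNReal.ofReal (PR 1 (1 + s) ^ (-(1:ℝ) / 4))
      = ENNReal.ofReal (∫ u in (0:ℝ)..1, p8u u ^ (-(1:ℝ) / 4)) := by
  have him : (fun u : ℝ => u⁻¹ - 1) '' Ioo (0:ℝ) 1 = Ioi 0 := by
    ext s
    simp only [mem_image, mem_Ioo, mem_Ioi]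
    constructor
    · rintro ⟨u, ⟨h0, h1⟩, rfl⟩
      have := (one_lt_inv₀ h0).2 h1
      linarith
    · intro hs
      refine ⟨(1 + s)⁻¹, ⟨by positivity, inv_lt_one_of_one_lt₀ (by linarith)⟩, by simp⟩
  have := lintegral_image_eq_lintegral_abs_deriv_mul (s := Ioo (0:ℝ) 1) (f := fun u => u⁻¹ - 1)
    (f' := fun u => -(u ^ 2)⁻¹) measurableSet_Ioo
    (fun s hs => ((hasDerivAt_inv hs.1.ne').sub_const 1).hasDerivWithinAt)
    (fun a _ b _ h => by simpa using h)
    (fun s => ENNReal.ofReal (PR 1 (1 + s) ^ (-(1:ℝ) / 4)))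
  rw [him] at this
  rw [this, intervalIntegral.integral_of_le zero_le_one,
    ofReal_integral_eq_lintegral_ofReal p8u_rpow_int
      (Filter.Eventually.of_forall fun u => Real.rpow_nonneg (zero_le_one.trans (p8u_ge u)) _),
    ← restrict_Ioo_eq_restrict_Ioc]
  refine setLIntegral_congr_fun measurableSet_Ioo fun u hu => ?_
  have hu0 : 0 < u := hu.1
  have hp : 0 < p8u u := by linarith [p8u_ge u]
  have e : PR 1 (1 + (u⁻¹ - 1)) = u ^ (-8:ℝ) * p8u u := by
    rw [Real.rpow_neg hu0.le]
    norm_cast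
    unfold PR p8u
    field_simp
    ring
  rw [abs_neg, abs_of_pos (by positivity), ← ENNReal.ofReal_mul (by positivity), e,
    Real.mul_rpow (by positivity) hp.le, ← Real.rpow_mul hu0.le]
  congr 1
  norm_num
  field_simp

lemma J_eq {y : ℝ} (hy : 0 < y) :
    ∫⁻ x in Ioi 0, ∫⁻ k in Ioi 0, Phi y x (x + k)
     = ENNReal.ofReal (y ^ (-(1:ℝ) / 4) / 2 * ∫ u in (0:ℝ)..1, p8u u ^ (-(1:ℝ) / 4)) := by
  calc ∫⁻ x in Ioi 0, ∫⁻ k in Ioi 0, Phi y x (x + k)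
      = ∫⁻ x in Ioi 0, ∫⁻ s in Ioi 0, ENNReal.ofReal x * Phi y x (x + x * s) :=
        setLIntegral_congr_fun measurableSet_Ioi fun x hx => scale_int hx _
    _ = ∫⁻ s in Ioi 0, ∫⁻ x in Ioi 0, ENNReal.ofReal x * Phi y x (x + x * s) := by
        refine lintegral_lintegral_swap (Measurable.aemeasurable ?_)
        refine Measurable.mul (by fun_prop) ?_
        exact (Phi_meas y).comp (g := fun p : ℝ × ℝ => Phi y p.1 p.2)
          (f := fun p : ℝ × ℝ => (p.1, p.1 + p.1 * p.2)) (by fun_prop)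
    _ = ∫⁻ s in Ioi (0:ℝ), ENNReal.ofReal (y ^ (-(1:ℝ) / 4) / 2) *
          ENNReal.ofReal (PR 1 (1 + s) ^ (-(1:ℝ) / 4)) := by
        refine setLIntegral_congr_fun measurableSet_Ioi fun s hs => ?_
        have hs : 0 < s := hs
        rw [← ENNReal.ofReal_mul (by positivity), ← inner_int hy
          (by unfold PR; positivity)]
        refine setLIntegral_congr_fun measurableSet_Ioi fun x hx => ?_
        have : PR x (x + x * s) = x ^ 8 * PR 1 (1 + s) := by unfold PR; ring
        simp only [Phi, FF, this]
    _ = _ := by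
        rw [lintegral_const_mul' _ _ ENNReal.ofReal_ne_top, subst_int,
          ← ENNReal.ofReal_mul (by positivity)]

lemma J2_fin {y : ℝ} (hy : 1 ≤ y) :
    ∫⁻ x in Ioi 0, ∫⁻ k in Ioi 0, Phi2 y x (x + k) ≠ ⊤ := by
  have hy0 : 0 < y := by linarith
  set c := (ENNReal.ofReal (Real.sqrt y))⁻¹ with hc
  have hcf : c ≠ ⊤ := by
    rw [hc, ← ENNReal.ofReal_inv_of_pos (Real.sqrt_pos.2 hy0)]; exact ENNReal.ofReal_ne_top
  have hb : ∀ z, 1 < z → y < z → y < z ^ 8 := fun z h1 h2 =>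
    h2.trans_le (le_self_pow₀ h1.le (by norm_num))
  have key : ∀ x ∈ Ioi (0:ℝ), (∫⁻ k in Ioi 0, Phi2 y x (x + k)) ≤
      (Iic y).indicator (fun _ => c * ENNReal.ofReal y) x := by
    intro x hx
    have hx : 0 < x := hx
    have k2 : ∀ k ∈ Ioi (0:ℝ), Phi2 y x (x + k) ≤
        (Iic y).indicator (fun _ => (Iic y).indicator (fun _ => c) k) x := by
      intro k hk
      have hk : 0 < k := hk
      unfold Phi2
      split_ifs with h
      · have hx8 : x ^ 8 ≤ PR x (x + k) := by
          unfold PR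
          have : 0 ≤ 14 * x ^ 4 * (x + k) ^ 4 + (x + k) ^ 8 := by positivity
          linarith
        have hk8 : k ^ 8 ≤ PR x (x + k) := by
          have : k ^ 8 ≤ (x + k) ^ 8 := by gcongr; linarith
          unfold PR
          have : 0 ≤ 14 * x ^ 4 * (x + k) ^ 4 + x ^ 8 := by positivity
          linarith
        have hxy : x ≤ y := by
          by_contra h'
          push Not at h'
          linarith [hb x (by linarith) h']
        have hky : k ≤ y := by
          by_contra h'
          push Not at h'
          linarith [hb k (by linarith) h']
        rw [indicator_of_mem (by exact hxy), indicator_of_mem (by exact hky)]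
      · exact zero_le
    refine (setLIntegral_mono' measurableSet_Ioi k2).trans ?_
    by_cases h : x ∈ Iic y
    · simp only [indicator_of_mem h]
      rw [lintegral_indicator measurableSet_Iic, Measure.restrict_restrict measurableSet_Iic,
        setLIntegral_const, inter_comm, Ioi_inter_Iic, Real.volume_Ioc, sub_zero]
    · simp [indicator_of_notMem h]
  refine ne_top_of_le_ne_top ?_ (setLIntegral_mono' measurableSet_Ioi key)
  rw [lintegral_indicator measurableSet_Iic, Measure.restrict_restrict measurableSet_Iic,
        setLIntegral_const, inter_comm, Ioi_inter_Iic, Real.volume_Ioc]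
  exact ENNReal.mul_ne_top (ENNReal.mul_ne_top hcf ENNReal.ofReal_ne_top) ENNReal.ofReal_ne_top

lemma g_lt_iff {t u : ℝ} (ht : 1 ≤ t) (hu : 0 ≤ u) :
    (Real.sqrt (t ^ 4 + 48) - 7) ^ ((1 : ℝ) / 4) < u ↔ t < p8u u ^ ((1:ℝ) / 4) := by
  have ht0 : 0 ≤ t := by linarith
  have h1 : 1 ≤ t ^ 4 := one_le_pow₀ ht
  have hs : 0 ≤ Real.sqrt (t ^ 4 + 48) - 7 := by
    have : (7:ℝ) ≤ Real.sqrt (t ^ 4 + 48) := Real.le_sqrt_of_sq_le (by linarith)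
    linarith
  have hp := p8u_ge u
  have hp0 : 0 ≤ p8u u := by linarith
  have a1 : ((Real.sqrt (t ^ 4 + 48) - 7) ^ ((1 : ℝ) / 4)) ^ 4 = Real.sqrt (t ^ 4 + 48) - 7 := by
    rw [← Real.rpow_natCast, ← Real.rpow_mul hs]; norm_num
  have a2 : (p8u u ^ ((1:ℝ) / 4)) ^ 4 = p8u u := by
    rw [← Real.rpow_natCast, ← Real.rpow_mul hp0]; norm_num
  rw [← pow_lt_pow_iff_left₀ (Real.rpow_nonneg hs _) hu (n := 4) (by norm_num),
    ← pow_lt_pow_iff_left₀ ht0 (Real.rpow_nonneg hp0 _) (n := 4) (by norm_num), a1, a2,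
    sub_lt_iff_lt_add, Real.sqrt_lt' (by positivity)]
  unfold p8u
  constructor <;> intro h <;> nlinarith

lemma alpha_eq (α₃ α₄ : ℝ) (g : ℝ → ℝ)
    (hg : ∀ t, g t = (Real.sqrt (t ^ 4 + 48) - 7) ^ ((1 : ℝ) / 4))
    (hα₃ : α₃ = ∫ u in (0 : ℝ)..1, 1 / Real.sqrt (p8u u))
    (hα₄ : α₄ = ∫ t in (1 : ℝ)..2, ∫ u in g t..1, 1 / Real.sqrt (p8u u)) :
    α₃ + α₄ = ∫ u in (0:ℝ)..1, p8u u ^ (-(1:ℝ) / 4) := by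
  set h : ℝ → ℝ := fun u => 1 / Real.sqrt (p8u u) with hh
  have hsp : ∀ u, 0 < Real.sqrt (p8u u) := fun u => Real.sqrt_pos.2 (by linarith [p8u_ge u])
  have hcont : Continuous h :=
    continuous_const.div (Real.continuous_sqrt.comp p8u_cont) fun u => (hsp u).ne'
  have hle : ∀ u, ‖h u‖ ≤ 1 := by
    intro u
    rw [hh, Real.norm_of_nonneg (by have := hsp u; positivity)]
    rw [div_le_one (hsp u), Real.one_le_sqrt]
    exact p8u_ge u
  have hgmeas : Measurable g := by
    have : g = fun t => (Real.sqrt (t ^ 4 + 48) - 7) ^ ((1 : ℝ) / 4) := funext hg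
    rw [this]; fun_prop
  have hg01 : ∀ t ∈ Ioc (1:ℝ) 2, 0 ≤ g t ∧ g t ≤ 1 := by
    intro t ht
    have h1 : 1 ≤ t ^ 4 := one_le_pow₀ ht.1.le
    have h16 : t ^ 4 ≤ 2 ^ 4 := pow_le_pow_left₀ (by linarith [ht.1]) ht.2 4
    have h7 : (7:ℝ) ≤ Real.sqrt (t ^ 4 + 48) := Real.le_sqrt_of_sq_le (by linarith)
    have h8 : Real.sqrt (t ^ 4 + 48) ≤ 8 := Real.sqrt_le_iff.2 ⟨by norm_num, by linarith⟩
    rw [hg]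
    exact ⟨Real.rpow_nonneg (by linarith) _,
      Real.rpow_le_one (by linarith) (by linarith) (by norm_num)⟩
  have e1 : α₄ = ∫ t in Ioc (1:ℝ) 2, ∫ u in Ioc (0:ℝ) 1, if g t < u then h u else 0 := by
    rw [hα₄, intervalIntegral.integral_of_le (by norm_num)]
    refine setIntegral_congr_fun measurableSet_Ioc fun t ht => ?_
    obtain ⟨h0, h1⟩ := hg01 t ht
    rw [intervalIntegral.integral_of_le h1]
    have : (fun u => if g t < u then h u else 0) = (Ioi (g t)).indicator h := by
      ext u; simp [indicator]
    rw [this, integral_indicator measurableSet_Ioi, Measure.restrict_restrict measurableSet_Ioi]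
    congr 2
    ext u
    simp only [mem_Ioc, mem_inter_iff, mem_Ioi]
    constructor
    · rintro ⟨a, b⟩; exact ⟨a, by linarith, b⟩
    · rintro ⟨a, _, b⟩; exact ⟨a, b⟩
  have hIntg : Integrable (Function.uncurry fun t u : ℝ => if g t < u then h u else 0)
      ((volume.restrict (Ioc (1:ℝ) 2)).prod (volume.restrict (Ioc (0:ℝ) 1))) := by
    refine Integrable.of_bound (C := 1) ?_ (Filter.Eventually.of_forall ?_)
    · refine Measurable.aestronglyMeasurable ?_
      refine Measurable.ite (measurableSet_lt (hgmeas.comp measurable_fst) measurable_snd)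
        (hcont.measurable.comp measurable_snd) measurable_const
    · rintro ⟨t, u⟩
      simp only [Function.uncurry]
      split_ifs
      · exact hle u
      · simp
  have e2 : α₄ = ∫ u in Ioc (0:ℝ) 1, (p8u u ^ ((1:ℝ) / 4) - 1) * h u := by
    rw [e1, integral_integral_swap hIntg]
    refine setIntegral_congr_fun measurableSet_Ioc fun u hu => ?_
    set q := p8u u ^ ((1:ℝ) / 4) with hq
    have hp := p8u_ge u
    have hq1 : 1 ≤ q := Real.one_le_rpow hp (by norm_num)
    have hq2 : q ≤ 2 := by
      have h16 : p8u u ≤ 16 := by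
        unfold p8u
        have : u ^ 8 ≤ 1 := pow_le_one₀ hu.1.le hu.2
        have : u ^ 4 ≤ 1 := pow_le_one₀ hu.1.le hu.2
        linarith
      calc q ≤ (16:ℝ) ^ ((1:ℝ) / 4) := by rw [hq]; gcongr
        _ = 2 := by
          rw [show (16:ℝ) = 2 ^ (4:ℝ) by norm_num, ← Real.rpow_mul (by norm_num)]; norm_num
    have : ∀ t ∈ Ioc (1:ℝ) 2, (if g t < u then h u else 0) =
        (Iio q).indicator (fun _ => h u) t := by
      intro t ht
      have := g_lt_iff ht.1.le hu.1.le
      rw [← hg] at this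
      simp only [indicator, mem_Iio, this, hq]
    rw [setIntegral_congr_fun measurableSet_Ioc this, integral_indicator measurableSet_Iio,
      Measure.restrict_restrict measurableSet_Iio, setIntegral_const]
    have hset : Iio q ∩ Ioc 1 2 = Ioo 1 q := by
      ext t
      simp only [mem_inter_iff, mem_Iio, mem_Ioc, mem_Ioo]
      constructor
      · rintro ⟨a, b, c⟩; exact ⟨b, a⟩
      · rintro ⟨a, b⟩; exact ⟨b, a, by linarith⟩
    rw [hset, measureReal_def, Real.volume_Ioo, ENNReal.toReal_ofReal (by linarith), smul_eq_mul]
  have hc4 : Continuous fun u => p8u u ^ ((1:ℝ) / 4) :=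
    p8u_cont.rpow_const fun u => Or.inr (by norm_num)
  have hi2 : IntervalIntegrable (fun u => (p8u u ^ ((1:ℝ) / 4) - 1) * h u) volume 0 1 :=
    ((hc4.sub continuous_const).mul hcont).intervalIntegrable _ _
  rw [e2, hα₃, ← intervalIntegral.integral_of_le zero_le_one,
    ← intervalIntegral.integral_add (hcont.intervalIntegrable _ _) hi2]
  refine intervalIntegral.integral_congr fun u _ => ?_
  have hp : 0 < p8u u := by linarith [p8u_ge u]
  simp only [hh]
  have : 1 / Real.sqrt (p8u u) = p8u u ^ (-(1:ℝ) / 2) := by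
    rw [Real.sqrt_eq_rpow, one_div, ← Real.rpow_neg hp.le]; norm_num
  rw [this]
  have e : p8u u ^ (-(1:ℝ) / 4) = p8u u ^ ((1:ℝ) / 4) * p8u u ^ (-(1:ℝ) / 2) := by
    rw [← Real.rpow_add hp]; norm_num
  rw [e]; ring

lemma J_add {y : ℝ} (hy0 : 0 < y) : ∫⁻ x in Ioi 0, ∫⁻ k in Ioi 0, Phi1 y x (x + k)
      = ENNReal.ofReal (y ^ (-(1:ℝ) / 4) / 2 * ∫ u in (0:ℝ)..1, p8u u ^ (-(1:ℝ) / 4))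
        + ∫⁻ x in Ioi 0, ∫⁻ k in Ioi 0, Phi2 y x (x + k) := by
  have hm : Measurable (Function.uncurry fun x k : ℝ => Phi y x (x + k)) :=
    (Phi_meas y).comp (g := fun p : ℝ × ℝ => Phi y p.1 p.2)
          (f := fun p : ℝ × ℝ => (p.1, p.1 + p.2)) (by fun_prop)
  have hm2 : ∀ x, Measurable fun k => Phi y x (x + k) := fun x =>
    (Phi_meas y).comp (g := fun p : ℝ × ℝ => Phi y p.1 p.2)
          (f := fun k : ℝ => (x, x + k)) (by fun_prop)
  have hm3 : Measurable fun x => ∫⁻ k in Ioi 0, Phi y x (x + k) := hm.lintegral_prod_right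
  rw [← J_eq hy0, ← lintegral_add_left hm3]
  refine lintegral_congr fun x => ?_
  rw [← lintegral_add_left (hm2 x)]
  exact lintegral_congr fun k => Phi_add _ _ _


lemma tsum_reindex (y : ℝ) (hy : 1 ≤ y) (i j a b : ℤ) (ha : a = 1 ∨ a = 2) (hb : b = 1 ∨ b = 2)
    (hi : a % 2 = i) (hj : (a + b) % 2 = j) :
    (∑' q : {q : ℤ × ℤ // 0 < q.1 ∧ q.1 < q.2 ∧ y < p8R q.1 q.2 ∧
          q.1 % 2 = i ∧ q.2 % 2 = j}, 1 / Real.sqrt (p8R q.1.1 q.1.2)) =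
    (∑' m : ℕ, ∑' n : ℕ, Phi y ((a:ℝ) + 2 * m) ((a:ℝ) + 2 * m + ((b:ℝ) + 2 * n))).toReal := by
  set s : Set (ℤ × ℤ) := {q | 0 < q.1 ∧ q.1 < q.2 ∧ y < p8R q.1 q.2 ∧
          q.1 % 2 = i ∧ q.2 % 2 = j} with hs
  set f : ℤ × ℤ → ℝ≥0∞ := fun q => Phi y q.1 q.2 with hf
  set e : ℕ × ℕ → ℤ × ℤ := fun p => (a + 2 * p.1, a + 2 * p.1 + (b + 2 * p.2)) with he
  have hinj : Function.Injective e := by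
    rintro ⟨m, n⟩ ⟨m', n'⟩ h
    simp only [he, Prod.mk.injEq] at h
    ext <;> simp <;> omega
  have hsupp : Function.support (s.indicator f) ⊆ Set.range e := by
    intro q hq
    have hq : q ∈ s := by
      by_contra h
      simp [h] at hq
    obtain ⟨h0, h1, -, h3, h4⟩ := hq
    refine ⟨(((q.1 - a) / 2).toNat, ((q.2 - q.1 - b) / 2).toNat), ?_⟩
    simp only [he]
    ext
    · simp only; omega
    · simp only; omega
  have h1 : ∑' q : s, f q = ∑' m : ℕ, ∑' n : ℕ,
      Phi y ((a:ℝ) + 2 * m) ((a:ℝ) + 2 * m + ((b:ℝ) + 2 * n)) := by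
    rw [tsum_subtype, ← hinj.tsum_eq hsupp, ENNReal.tsum_prod']
    refine tsum_congr fun m => tsum_congr fun n => ?_
    by_cases h : e (m, n) ∈ s
    · rw [indicator_of_mem h]
      simp [hf, he]
    · rw [indicator_of_notMem h]
      have : ¬ (y < PR ((a:ℝ) + 2 * m) ((a:ℝ) + 2 * m + ((b:ℝ) + 2 * n))) := by
        intro h'
        apply h
        simp only [hs, he, mem_ofPred_eq]
        refine ⟨by omega, by omega, ?_, by omega, by omega⟩
        unfold p8R
        unfold PR at h'
        push_cast
        exact h'
      rw [Phi, if_neg this]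
  rw [← h1]
  have hp : ∀ q : s, f q = ENNReal.ofReal (1 / Real.sqrt (p8R q.1.1 q.1.2)) := by
    rintro ⟨q, hq⟩
    have hy' : y < PR q.1 q.2 := hq.2.2.1
    have e2 : p8R q.1 q.2 = PR q.1 q.2 := rfl
    simp only [hf, Phi]
    rw [if_pos hy', FF, e2, one_div, ENNReal.ofReal_inv_of_pos (Real.sqrt_pos.2 (by linarith))]
  rw [ENNReal.tsum_toReal_eq (fun q => by rw [hp]; exact ENNReal.ofReal_ne_top)]
  refine tsum_congr fun q => ?_
  rw [hp, ENNReal.toReal_ofReal (by positivity)]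

theorem stmt12 (α₃ α₄ : ℝ) (g : ℝ → ℝ)
    (hg : ∀ t, g t = (Real.sqrt (t ^ 4 + 48) - 7) ^ ((1 : ℝ) / 4))
    (hα₃ : α₃ = ∫ u in (0 : ℝ)..1, 1 / Real.sqrt (p8u u))
    (hα₄ : α₄ = ∫ t in (1 : ℝ)..2, ∫ u in g t..1, 1 / Real.sqrt (p8u u)) :
    ∃ C > 0, ∀ y : ℝ, 1 ≤ y → ∀ i j : ℤ,
      (i = 0 ∨ i = 1) → (j = 0 ∨ j = 1) → ¬(i = 0 ∧ j = 0) →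
      |(∑' q : {q : ℤ × ℤ // 0 < q.1 ∧ q.1 < q.2 ∧ y < p8R q.1 q.2 ∧
          q.1 % 2 = i ∧ q.2 % 2 = j}, 1 / Real.sqrt (p8R q.1.1 q.1.2)) -
        (α₃ + α₄) / (8 * y ^ ((1 : ℝ) / 4))| ≤ C * y ^ (-(3 : ℝ) / 8) := by
  refine ⟨4, by norm_num, ?_⟩
  intro y hy i j hi hj _
  have hy0 : 0 < y := by linarith
  obtain ⟨a, ha, hai⟩ : ∃ a : ℤ, (a = 1 ∨ a = 2) ∧ a % 2 = i := by
    rcases hi with rfl | rfl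
    · exact ⟨2, by simp, by norm_num⟩
    · exact ⟨1, by simp, by norm_num⟩
  obtain ⟨b, hb, hbj⟩ : ∃ b : ℤ, (b = 1 ∨ b = 2) ∧ (a + b) % 2 = j := by
    by_cases h : (a + 1) % 2 = j
    · exact ⟨1, by simp, h⟩
    · exact ⟨2, by simp, by omega⟩
  rw [tsum_reindex y hy i j a b ha hb hai hbj, alpha_eq α₃ α₄ g hg hα₃ hα₄]
  have ha1 : (1:ℝ) ≤ a ∧ (a:ℝ) ≤ 2 := by rcases ha with rfl | rfl <;> norm_num
  have hb1 : (1:ℝ) ≤ b ∧ (b:ℝ) ≤ 2 := by rcases hb with rfl | rfl <;> norm_num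
  set I := ∫ u in (0:ℝ)..1, p8u u ^ (-(1:ℝ) / 4) with hI
  have hI0 : 0 ≤ I := intervalIntegral.integral_nonneg zero_le_one
    fun u _ => Real.rpow_nonneg (zero_le_one.trans (p8u_ge u)) _
  set T := ∑' m : ℕ, ∑' n : ℕ, Phi y ((a:ℝ) + 2 * m) ((a:ℝ) + 2 * m + ((b:ℝ) + 2 * n)) with hT
  set κ := 4 / 3 * y ^ (-(3:ℝ) / 8) with hκ
  have hκ0 : 0 ≤ κ := by positivity
  have hK1 : ∫⁻ k in Ioi 0, Phi1 y 0 k ≤ ENNReal.ofReal κ := Phi1_K hy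
  have hK2 : ∫⁻ k in Ioi 0, Phi2 y 0 k ≤ ENNReal.ofReal κ := by
    refine le_trans (lintegral_mono fun k => ?_) hK1
    rw [Phi_add]; exact le_add_self
  obtain ⟨p1, q1⟩ := aux2D (Phi1_anti y) ha1.1 ha1.2 hb1.1 hb1.2 rfl rfl hK1
  obtain ⟨p2, q2⟩ := aux2D (Phi2_anti y) ha1.1 ha1.2 hb1.1 hb1.2 rfl rfl hK2
  have hSadd : ∑' m : ℕ, ∑' n : ℕ, Phi1 y ((a:ℝ) + 2 * m) ((a:ℝ) + 2 * m + ((b:ℝ) + 2 * n))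
      = T + ∑' m : ℕ, ∑' n : ℕ, Phi2 y ((a:ℝ) + 2 * m) ((a:ℝ) + 2 * m + ((b:ℝ) + 2 * n)) := by
    simp only [Phi_add, ENNReal.tsum_add, hT]
  have hJadd := J_add hy0
  rw [← hI] at hJadd
  have hJ2 := J2_fin hy
  rw [hSadd, hJadd] at p1 q1
  set S2 := ∑' m : ℕ, ∑' n : ℕ, Phi2 y ((a:ℝ) + 2 * m) ((a:ℝ) + 2 * m + ((b:ℝ) + 2 * n))
  set J2 := ∫⁻ x in Ioi 0, ∫⁻ k in Ioi 0, Phi2 y x (x + k)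
  have hfin : T + S2 ≠ ⊤ := by
    intro h
    rw [h] at p1
    have : (4:ℝ≥0∞) * ⊤ = ⊤ := by simp
    rw [this] at p1
    refine absurd (top_le_iff.1 p1) ?_
    simp [hJ2, ENNReal.mul_eq_top]
  have hTf : T ≠ ⊤ := fun h => hfin (by simp [h])
  have hSf : S2 ≠ ⊤ := fun h => hfin (by simp [h])
  lift T to NNReal using hTf with t ht
  lift S2 to NNReal using hSf with s2 hs2
  lift J2 to NNReal using hJ2 with j2 hj2
  have hJ0 : 0 ≤ y ^ (-(1:ℝ) / 4) / 2 * I := by positivity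
  set jj := y ^ (-(1:ℝ) / 4) / 2 * I with hjj
  clear_value jj κ
  obtain ⟨jn, rfl⟩ : ∃ z : NNReal, (z:ℝ) = jj := ⟨jj.toNNReal, Real.coe_toNNReal _ hJ0⟩
  obtain ⟨kn, rfl⟩ : ∃ z : NNReal, (z:ℝ) = κ := ⟨κ.toNNReal, Real.coe_toNNReal _ hκ0⟩
  rw [ENNReal.ofReal_coe_nnreal, ENNReal.ofReal_coe_nnreal] at p1 q1
  rw [ENNReal.ofReal_coe_nnreal] at p2 q2
  have p1' : 4 * ((t:ℝ) + s2) ≤ (jn:ℝ) + j2 + 6 * (kn:ℝ) := by exact_mod_cast p1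
  have q1' : (jn:ℝ) + j2 ≤ 4 * ((t:ℝ) + s2) + 6 * (kn:ℝ) := by exact_mod_cast q1
  have p2' : 4 * (s2:ℝ) ≤ j2 + 6 * (kn:ℝ) := by exact_mod_cast p2
  have q2' : (j2:ℝ) ≤ 4 * s2 + 6 * (kn:ℝ) := by exact_mod_cast q2
  have hfinal : I / (8 * y ^ ((1:ℝ) / 4)) = jn / 4 := by
    rw [hjj, show (-(1:ℝ) / 4) = -(1 / 4) by norm_num, Real.rpow_neg hy0.le]
    field_simp
    ring
  rw [hfinal, ENNReal.coe_toReal, abs_le]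
  constructor <;> linarith
end

section
/- For every real z ≥ 1, the two-dimensional Lebesgue measure of the region ℛ₂(z) = {(x, y) ∈ ℝ² : 0 ≤ x ≤ y and p₈(x,y) ≤ z} equals β·z^{1/4}, where β = (1/2)∫_{π/4}^{π/2} (p₈(1, tan θ))^{−1/4}·(cos θ)^{−2} dθ. -/
open Real

/-- p₈(x,y) = x⁸ + 14x⁴y⁴ + y⁸ for real x, y. -/
def p8f (x y : ℝ) : ℝ := x ^ 8 + 14 * x ^ 4 * y ^ 4 + y ^ 8

theorem aux_P_pos (θ : ℝ) : 0 < p8f (cos θ) (sin θ) := by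
  unfold p8f
  by_cases h : cos θ = 0
  · have : sin θ ≠ 0 := by
      intro h2
      have := sin_sq_add_cos_sq θ
      rw [h, h2] at this
      norm_num at this
    positivity
  · positivity

theorem aux_sector (θ : ℝ) (h1 : -π < θ) (h2 : θ < π) :
    (0 ≤ cos θ ∧ cos θ ≤ sin θ) ↔ (π / 4 ≤ θ ∧ θ ≤ π / 2) := by
  have hpi := pi_pos
  constructor
  · rintro ⟨hc, hs⟩
    have h0 : 0 ≤ θ := by
      by_contra! h
      have := sin_neg_of_neg_of_neg_pi_lt h h1
      linarith
    constructor
    · by_contra! h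
      have a1 : sin θ < sin (π / 4) := sin_lt_sin_of_lt_of_le_pi_div_two (by linarith) (by linarith) h
      have a2 : cos (π / 4) < cos θ := cos_lt_cos_of_nonneg_of_le_pi h0 (by linarith) h
      rw [sin_pi_div_four] at a1
      rw [cos_pi_div_four] at a2
      linarith
    · by_contra! h
      have := cos_neg_of_pi_div_two_lt_of_lt h (by linarith)
      linarith
  · rintro ⟨ha, hb⟩
    refine ⟨cos_nonneg_of_neg_pi_div_two_le_of_le (by linarith) hb, ?_⟩
    have a1 : sin (π / 4) ≤ sin θ := sin_le_sin_of_le_of_le_pi_div_two (by linarith) hb ha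
    have a2 : cos θ ≤ cos (π / 4) := cos_le_cos_of_nonneg_of_le_pi (by linarith) (by linarith) ha
    rw [sin_pi_div_four] at a1
    rw [cos_pi_div_four] at a2
    linarith

theorem aux_scale (r a b : ℝ) : p8f (r * a) (r * b) = r ^ 8 * p8f a b := by
  unfold p8f; ring

theorem aux_r (r P z : ℝ) (hr : 0 < r) (hP : 0 < P) (hz : 0 < z) :
    r ^ 8 * P ≤ z ↔ r ≤ (z / P) ^ ((1 : ℝ) / 8) := by
  rw [← le_div_iff₀ hP, one_div, Real.le_rpow_inv_iff_of_pos hr.le (by positivity) (by norm_num)]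
  norm_cast

theorem aux_integral (R : ℝ) (hR : 0 ≤ R) :
    ∫⁻ r in Set.Ioc 0 R, ENNReal.ofReal r = ENNReal.ofReal (R ^ 2 / 2) := by
  rw [← MeasureTheory.ofReal_integral_eq_lintegral_ofReal]
  · rw [← intervalIntegral.integral_of_le hR, integral_id]; simp
  · exact (continuous_id.integrableOn_Ioc)
  · exact (MeasureTheory.ae_restrict_mem measurableSet_Ioc).mono fun r hr => hr.1.le

theorem aux_R (P z : ℝ) (hP : 0 < P) (hz : 0 < z) :
    ((z / P) ^ ((1 : ℝ) / 8)) ^ 2 / 2 = 1 / 2 * z ^ ((1 : ℝ) / 4) * P ^ (-(1 : ℝ) / 4) := by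
  rw [← Real.rpow_natCast, ← Real.rpow_mul (by positivity), Real.div_rpow hz.le hP.le,
    neg_div, Real.rpow_neg hP.le]
  norm_num
  ring

theorem aux_tan (θ : ℝ) (hc : 0 < cos θ) :
    (p8f 1 (tan θ)) ^ (-(1 : ℝ) / 4) * (cos θ) ^ (-(2 : ℝ)) =
      (p8f (cos θ) (sin θ)) ^ (-(1 : ℝ) / 4) := by
  have h : p8f (cos θ) (sin θ) = (cos θ) ^ 8 * p8f 1 (tan θ) := by
    rw [← aux_scale, mul_one, mul_comm (cos θ) (tan θ), tan_mul_cos hc.ne']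
  have hp : 0 ≤ p8f 1 (tan θ) := by unfold p8f; positivity
  rw [h, Real.mul_rpow (by positivity) hp, ← Real.rpow_natCast, ← Real.rpow_mul hc.le]
  norm_num
  ring

open MeasureTheory Set in
theorem stmt14 (β : ℝ)
    (hβ : β = (1 / 2) * ∫ θ in (π / 4)..(π / 2),
      (p8f 1 (Real.tan θ)) ^ (-(1 : ℝ) / 4) * (Real.cos θ) ^ (-(2 : ℝ)))
    (z : ℝ) (hz : 1 ≤ z) :
    MeasureTheory.volume {p : ℝ × ℝ | 0 ≤ p.1 ∧ p.1 ≤ p.2 ∧ p8f p.1 p.2 ≤ z} =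
      ENNReal.ofReal (β * z ^ ((1 : ℝ) / 4)) := by
  have hpi := pi_pos
  have hz0 : 0 < z := by linarith
  set S := {p : ℝ × ℝ | 0 ≤ p.1 ∧ p.1 ≤ p.2 ∧ p8f p.1 p.2 ≤ z} with hS
  have hSm : MeasurableSet S := by
    apply IsClosed.measurableSet
    have hc : Continuous fun p : ℝ × ℝ => p8f p.1 p.2 := by
      unfold p8f
      fun_prop
    have h1 : IsClosed {p : ℝ × ℝ | p8f p.1 p.2 ≤ z} := isClosed_le hc continuous_const
    have h2 : IsClosed {p : ℝ × ℝ | p.1 ≤ p.2} := isClosed_le continuous_fst continuous_snd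
    have h3 : IsClosed {p : ℝ × ℝ | 0 ≤ p.1} := isClosed_le continuous_const continuous_fst
    exact h3.inter (h2.inter h1)
  have hcont : Continuous fun θ : ℝ =>
      1 / 2 * z ^ ((1 : ℝ) / 4) * (p8f (cos θ) (sin θ)) ^ (-(1 : ℝ) / 4) := by
    refine continuous_const.mul (Continuous.rpow_const ?_ fun θ => Or.inl (aux_P_pos θ).ne')
    unfold p8f
    fun_prop
  have inner : ∀ θ ∈ Ioo (-π) π,
      ∫⁻ r in Ioi (0 : ℝ), ENNReal.ofReal r * S.indicator 1 (r * cos θ, r * sin θ) =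
      (Icc (π / 4) (π / 2)).indicator (fun θ => ENNReal.ofReal
        (1 / 2 * z ^ ((1 : ℝ) / 4) * (p8f (cos θ) (sin θ)) ^ (-(1 : ℝ) / 4))) θ := by
    intro θ hθ
    have hP := aux_P_pos θ
    have hmem : ∀ r : ℝ, 0 < r → ((r * cos θ, r * sin θ) ∈ S ↔
        θ ∈ Icc (π / 4) (π / 2) ∧ r ≤ (z / p8f (cos θ) (sin θ)) ^ ((1 : ℝ) / 8)) := by
      intro r hr
      simp only [hS, mem_ofPred_eq, mem_Icc]
      rw [← aux_sector θ hθ.1 hθ.2, aux_scale, aux_r r _ z hr hP hz0, and_assoc,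
        mul_le_mul_iff_right₀ hr, mul_nonneg_iff_of_pos_left hr]
    by_cases h : θ ∈ Icc (π / 4) (π / 2)
    · rw [indicator_of_mem h, ← aux_R _ z hP hz0, ← aux_integral _ (by positivity),
        ← lintegral_indicator measurableSet_Ioi, ← lintegral_indicator measurableSet_Ioc]
      congr 1
      ext r
      by_cases hr : 0 < r
      · by_cases hr2 : r ≤ (z / p8f (cos θ) (sin θ)) ^ ((1 : ℝ) / 8)
        · rw [indicator_of_mem (show r ∈ Ioi 0 from hr), indicator_of_mem ((hmem r hr).2 ⟨h, hr2⟩),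
            indicator_of_mem (show r ∈ Ioc 0 _ from ⟨hr, hr2⟩)]
          simp
        · rw [indicator_of_mem (show r ∈ Ioi 0 from hr),
            indicator_of_notMem (fun hh => hr2 ((hmem r hr).1 hh).2),
            indicator_of_notMem (fun hh => hr2 hh.2)]
          simp
      · rw [indicator_of_notMem (show r ∉ Ioi 0 from fun hh => hr hh), indicator_of_notMem (fun hh => hr hh.1)]
    · rw [indicator_of_notMem h, ← lintegral_zero (μ := volume.restrict (Ioi (0 : ℝ)))]
      refine setLIntegral_congr_fun measurableSet_Ioi fun r hr => ?_
      rw [indicator_of_notMem (fun hh => h ((hmem r hr).1 hh).1), mul_zero]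
  rw [← lintegral_indicator_one hSm, ← lintegral_comp_polarCoord_symm]
  simp only [polarCoord_target, polarCoord_symm_apply, smul_eq_mul]
  rw [Measure.volume_eq_prod, setLIntegral_prod_symm]
  · rw [setLIntegral_congr_fun measurableSet_Ioo inner, ← lintegral_indicator measurableSet_Ioo,
      indicator_indicator, inter_eq_self_of_subset_right, lintegral_indicator measurableSet_Icc,
      ← ofReal_integral_eq_lintegral_ofReal]
    · rw [integral_Icc_eq_integral_Ioc, integral_const_mul,
        ← intervalIntegral.integral_of_le (by linarith), hβ]
      have : ∫ θ in (π / 4)..(π / 2),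
          (p8f 1 (Real.tan θ)) ^ (-(1 : ℝ) / 4) * (Real.cos θ) ^ (-(2 : ℝ)) =
          ∫ θ in (π / 4)..(π / 2), (p8f (cos θ) (sin θ)) ^ (-(1 : ℝ) / 4) := by
        apply intervalIntegral.integral_congr_Ioo_of_le (by linarith)
        intro θ hθ
        exact aux_tan θ (cos_pos_of_mem_Ioo ⟨by linarith [hθ.1], hθ.2⟩)
      rw [this]
      congr 1
      ring
    · exact hcont.integrableOn_Icc
    · refine Filter.Eventually.of_forall fun θ => ?_
      have := aux_P_pos θ
      simp only [Pi.zero_apply]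
      positivity
    · intro θ hθ
      exact ⟨by linarith [hθ.1], by linarith [hθ.2]⟩
  · refine Measurable.aemeasurable ?_
    refine (ENNReal.measurable_ofReal.comp measurable_fst).mul
      ((measurable_one.indicator hSm).comp ?_)
    fun_prop
end

section
/- Let ℛ₂(z) = {(x, y) ∈ ℝ² : 0 ≤ x ≤ y, p₈(x,y) ≤ z} and fix (i, j) ∈ {0,1}² with (i, j) ≠ (0, 0). Let L(z) be the number of integer pairs (v, w) ∈ ℛ₂(z) with v ≡ i (mod 2) and w ≡ j (mod 2), and let L′(z) be the number of those with additionally gcd(v, w) = 1. There is a constant C > 0 such that for all real z ≥ 2: |L(z) − (β/4)z^{1/4}| ≤ C·z^{1/8} and |L′(z) − (β/(3ζ(2)))z^{1/4}| ≤ C·z^{1/8}·log z. -/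
open Real

/-- The number of integer points (v,w) in ℛ₂(z) with v ≡ i (mod 2) and w ≡ j (mod 2). -/
noncomputable def L (i j : ℤ) (z : ℝ) : ℕ :=
  Set.ncard {q : ℤ × ℤ | 0 ≤ q.1 ∧ q.1 ≤ q.2 ∧ p8f q.1 q.2 ≤ z ∧
    q.1 % 2 = i ∧ q.2 % 2 = j}

/-- The number of those points with additionally gcd(v,w) = 1. -/
noncomputable def L' (i j : ℤ) (z : ℝ) : ℕ :=
  Set.ncard {q : ℤ × ℤ | 0 ≤ q.1 ∧ q.1 ≤ q.2 ∧ p8f q.1 q.2 ≤ z ∧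
    q.1 % 2 = i ∧ q.2 % 2 = j ∧ Int.gcd q.1 q.2 = 1}

noncomputable def Yf (z x : ℝ) : ℝ := √(√(√(48 * x ^ 8 + z) - 7 * x ^ 4))
noncomputable def ell (z x : ℝ) : ℝ := max 0 (Yf z x - x)

lemma Yf_eq {x y : ℝ} (hy : 0 ≤ y) : Yf (p8f x y) x = y := by
  unfold Yf p8f
  have h1 : 48 * x ^ 8 + (x ^ 8 + 14 * x ^ 4 * y ^ 4 + y ^ 8) = (y ^ 4 + 7 * x ^ 4) ^ 2 := by ring
  rw [h1, Real.sqrt_sq (by positivity)]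
  have h2 : y ^ 4 + 7 * x ^ 4 - 7 * x ^ 4 = (y ^ 2) ^ 2 := by ring
  rw [h2, Real.sqrt_sq (by positivity), Real.sqrt_sq hy]

lemma le_Yf {x y z : ℝ} (hx : 0 ≤ x) (hxy : x ≤ y) (hz : 0 ≤ z) :
    p8f x y ≤ z ↔ y ≤ Yf z x := by
  rcases (hx.trans hxy).eq_or_lt with h0 | hy
  · subst h0
    have : x = 0 := le_antisymm hxy hx
    subst this
    simp [p8f, Yf, hz]
  · unfold Yf p8f
    rw [Real.le_sqrt' hy, Real.le_sqrt' (by positivity), le_sub_iff_add_le,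
      Real.le_sqrt' (by positivity)]
    constructor <;> intro h <;> nlinarith

lemma Yf_anti {z : ℝ} (hz : 0 ≤ z) : AntitoneOn (Yf z) (Set.Ici 0) := by
  intro a ha b hb hab
  have ha' : (0:ℝ) ≤ a := ha
  unfold Yf
  apply Real.sqrt_le_sqrt
  apply Real.sqrt_le_sqrt
  have h4 : a ^ 4 ≤ b ^ 4 := by gcongr
  have ha4 : 0 ≤ a ^ 4 := by positivity
  set u := a ^ 4
  set v := b ^ 4
  have e1 : a ^ 8 = u ^ 2 := by simp only [u]; ring
  have e2 : b ^ 8 = v ^ 2 := by simp only [v]; ring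
  rw [e1, e2]
  have : √(48 * v ^ 2 + z) ≤ √(48 * u ^ 2 + z) + 7 * (v - u) := by
    rw [Real.sqrt_le_left (by have := Real.sqrt_nonneg (48 * u ^ 2 + z); nlinarith)]
    have hs := Real.sq_sqrt (show 0 ≤ 48 * u ^ 2 + z by positivity)
    have h6 : 48 / 7 * u ≤ √(48 * u ^ 2 + z) := by
      apply Real.le_sqrt_of_sq_le; nlinarith
    nlinarith [mul_nonneg (sub_nonneg.2 h4) (sub_nonneg.2 h6), sq_nonneg (v - u)]
  linarith

lemma ell_anti {z : ℝ} (hz : 0 ≤ z) : AntitoneOn (ell z) (Set.Ici 0) := by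
  intro a ha b hb hab
  have := Yf_anti hz ha hb hab
  unfold ell
  exact max_le_max le_rfl (by linarith)

lemma ell_nonneg (z x : ℝ) : 0 ≤ ell z x := le_max_left _ _

lemma ell_cont (z : ℝ) : Continuous (ell z) := by
  unfold ell Yf; fun_prop

lemma ell_zero {N : ℝ} (hN : 0 ≤ N) : ell (N ^ 8) 0 = N := by
  have := Yf_eq (x := 0) hN
  simp [p8f] at this
  simp [ell, this, hN]

lemma beta_eq : ∫ θ in (π / 4)..(π / 2),
      (p8f 1 (Real.tan θ)) ^ (-(1 : ℝ) / 4) * (Real.cos θ) ^ (-(2 : ℝ)) =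
    ∫ s in (0:ℝ)..1, (p8f s 1) ^ (-(1 : ℝ) / 4) := by
  have hpi := Real.pi_pos
  have hg : Continuous (fun s : ℝ => (p8f s 1) ^ (-(1 : ℝ) / 4)) := by
    refine Continuous.rpow_const (by unfold p8f; fun_prop) (fun s => Or.inl ?_)
    unfold p8f; positivity
  have hsin : ∀ θ ∈ Set.uIcc (π / 4) (π / 2), 0 < sin θ := by
    intro θ h
    rw [Set.uIcc_of_le (by linarith)] at h
    exact Real.sin_pos_of_pos_of_lt_pi (by linarith [h.1]) (by linarith [h.2])
  have key := intervalIntegral.integral_comp_mul_deriv (a := π / 4) (b := π / 2)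
    (f := fun θ => cos θ / sin θ) (f' := fun θ => - 1 / sin θ ^ 2)
    (g := (fun s : ℝ => (p8f s 1) ^ (-(1 : ℝ) / 4))) ?_ ?_ hg
  · have e1 : cos (π / 4) / sin (π / 4) = 1 := by
      rw [Real.cos_pi_div_four, Real.sin_pi_div_four]; exact div_self (by positivity)
    simp only [e1, Real.cos_pi_div_two, zero_div] at key
    rw [intervalIntegral.integral_symm 0 1] at key
    rw [← neg_eq_iff_eq_neg.2 key, ← intervalIntegral.integral_neg]
    rw [intervalIntegral.integral_of_le (by linarith), intervalIntegral.integral_of_le (by linarith),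
      MeasureTheory.integral_Ioc_eq_integral_Ioo, MeasureTheory.integral_Ioc_eq_integral_Ioo]
    apply MeasureTheory.setIntegral_congr_fun measurableSet_Ioo
    intro θ h
    have hs : 0 < sin θ := hsin θ (by rw [Set.uIcc_of_le (by linarith)]; exact ⟨h.1.le, h.2.le⟩)
    have hc : 0 < cos θ := Real.cos_pos_of_mem_Ioo ⟨by linarith [h.1], h.2⟩
    simp only [Function.comp]
    have ht : p8f 1 (tan θ) = p8f (cos θ / sin θ) 1 * ((sin θ / cos θ) ^ 8) := by
      rw [Real.tan_eq_sin_div_cos]; unfold p8f; field_simp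
    have hp : 0 ≤ p8f (cos θ / sin θ) 1 := by unfold p8f; positivity
    rw [ht, Real.mul_rpow hp (by positivity), Real.rpow_neg hc.le, ← Real.rpow_natCast (sin θ / cos θ) 8, ← Real.rpow_mul (by positivity)]
    have : ((8:ℕ):ℝ) * (-1 / 4) = -(2:ℕ) := by norm_num
    rw [this, Real.rpow_neg (by positivity), Real.rpow_natCast]
    have : cos θ ^ (2:ℝ) = cos θ ^ 2 := by norm_cast
    rw [this]
    field_simp
  · intro θ h
    have hs := (hsin θ h).ne'
    refine ((Real.hasDerivAt_cos θ).div (Real.hasDerivAt_sin θ) hs).congr_deriv ?_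
    congr 1
    nlinarith [Real.sin_sq_add_cos_sq θ]
  · apply ContinuousOn.div (by fun_prop) (by fun_prop)
    intro θ h
    exact (pow_pos (hsin θ h) 2).ne'

lemma area {N b : ℝ} (hN : 0 < N) (hb : N ≤ b) :
    ∫ x in (0:ℝ)..b, ell (N ^ 8) x = (1 / 2 * ∫ s in (0:ℝ)..1, (p8f s 1) ^ (-(1 : ℝ) / 4)) * N ^ 2 := by
  have hp : ∀ s, 0 < p8f s 1 := by intro s; unfold p8f; positivity
  set y : ℝ → ℝ := fun s => N * (p8f s 1) ^ (-(1:ℝ) / 8) with hy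
  have hypos : ∀ s, 0 < y s := fun s => mul_pos hN (Real.rpow_pos_of_pos (hp s) _)
  obtain ⟨y', hy', hy'c⟩ : ∃ y' : ℝ → ℝ, (∀ s, HasDerivAt y (y' s) s) ∧ Continuous y' := by
    refine ⟨fun s => N * ((8 * s ^ 7 + 14 * (4 * s ^ 3)) * (-(1:ℝ) / 8) * (p8f s 1) ^ (-(1:ℝ) / 8 - 1)), ?_, ?_⟩
    · intro s
      apply HasDerivAt.const_mul
      apply HasDerivAt.rpow_const (f := fun s => p8f s 1) _ (Or.inl (hp s).ne')
      unfold p8f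
      have h1 := ((hasDerivAt_pow 8 s).add (((hasDerivAt_pow 4 s).const_mul 14).mul_const ((1:ℝ) ^ 4))).add_const ((1:ℝ) ^ 8)
      refine h1.congr_deriv ?_
      simp
    · have : Continuous (fun s => (p8f s 1) ^ (-(1:ℝ) / 8 - 1)) :=
        Continuous.rpow_const (by unfold p8f; fun_prop) (fun s => Or.inl (hp s).ne')
      fun_prop
  have hyc : Continuous y := continuous_iff_continuousAt.2 fun s => (hy' s).continuousAt
  have hyp : ∀ s, p8f (s * y s) (y s) = N ^ 8 := by
    intro s
    have : p8f (s * y s) (y s) = p8f s 1 * y s ^ 8 := by unfold p8f; ring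
    rw [this]
    simp only [hy, mul_pow]
    rw [← Real.rpow_natCast (p8f s 1 ^ _), ← Real.rpow_mul (hp s).le]
    norm_num
    rw [Real.rpow_neg (hp s).le, Real.rpow_one]
    have := (hp s).ne'
    field_simp
  have hell : ∀ s ∈ Set.Icc (0:ℝ) 1, ell (N ^ 8) (s * y s) = y s - s * y s := by
    intro s hs
    unfold ell
    rw [← hyp s, Yf_eq (hypos s).le]
    apply max_eq_right
    nlinarith [hypos s, hs.2]
  have hx0 : y 1 ≤ N := by
    have : p8f 1 1 ^ (-(1:ℝ) / 8) ≤ 1 := by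
      apply Real.rpow_le_one_of_one_le_of_nonpos <;> norm_num [p8f]
    simp only [hy]; nlinarith
  have hii : ∀ a b, IntervalIntegrable (ell (N ^ 8)) MeasureTheory.volume a b :=
    fun a b => (ell_cont _).intervalIntegrable _ _
  rw [← intervalIntegral.integral_add_adjacent_intervals (hii 0 (y 1)) (hii (y 1) b)]
  have h2 : ∫ x in (y 1)..b, ell (N ^ 8) x = 0 := by
    rw [← intervalIntegral.integral_zero (a := y 1) (b := b) (μ := MeasureTheory.volume)]
    apply intervalIntegral.integral_congr
    intro x hx
    rw [Set.uIcc_of_le (by linarith)] at hx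
    have h1 := hell 1 (by simp)
    simp at h1
    have h3 := ell_anti (z := N ^ 8) (by positivity) (a := y 1) (b := x) (hypos 1).le
      (show 0 ≤ x by linarith [hypos 1, hx.1]) hx.1
    exact le_antisymm (by simpa [h1] using h3) (ell_nonneg _ _)
  have key := intervalIntegral.integral_comp_mul_deriv (a := 0) (b := 1)
    (f := fun s => s * y s) (f' := fun s => 1 * y s + s * y' s)
    (g := ell (N ^ 8)) (fun s _ => (hasDerivAt_id s).mul (hy' s)) (by fun_prop) (ell_cont _)
  simp only [zero_mul, one_mul] at key
  rw [h2, add_zero, ← key]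
  have hF : ∀ s, HasDerivAt (fun s => (s - s ^ 2) * y s ^ 2 / 2)
      (((1 - 2 * s) * y s ^ 2 + (s - s ^ 2) * (2 * y s * y' s)) / 2) s := by
    intro s
    have h1 := (((hasDerivAt_id s).sub (hasDerivAt_pow 2 s)).mul ((hy' s).pow 2)).div_const 2
    refine h1.congr_deriv ?_
    simp
  have hFi := intervalIntegral.integral_eq_sub_of_hasDerivAt (a := 0) (b := 1) (fun s _ => hF s)
    (Continuous.intervalIntegrable (by fun_prop) _ _)
  simp at hFi
  have hsq : ∀ s, y s ^ 2 = N ^ 2 * (p8f s 1) ^ (-(1 : ℝ) / 4) := by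
    intro s
    simp only [hy, mul_pow]
    rw [← Real.rpow_natCast (p8f s 1 ^ _), ← Real.rpow_mul (hp s).le]
    norm_num
  have : ∫ s in (0:ℝ)..1, (ell (N ^ 8) ∘ fun s => s * y s) s * (y s + s * y' s) =
      ∫ s in (0:ℝ)..1, (y s ^ 2 / 2 + ((1 - 2 * s) * y s ^ 2 + (s - s ^ 2) * (2 * y s * y' s)) / 2) := by
    apply intervalIntegral.integral_congr
    intro s hs
    rw [Set.uIcc_of_le (by norm_num)] at hs
    simp only [Function.comp, hell s hs]
    ring
  rw [this, intervalIntegral.integral_add (Continuous.intervalIntegrable (by fun_prop) _ _) (Continuous.intervalIntegrable (by fun_prop) _ _)]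
  have h9 : ∫ s in (0:ℝ)..1, ((1 - 2 * s) * y s ^ 2 + (s - s ^ 2) * (2 * y s * y' s)) / 2 = 0 := by
    simpa using hFi
  rw [h9]
  simp only [hsq, mul_div_assoc, add_zero]
  rw [intervalIntegral.integral_const_mul, intervalIntegral.integral_div]
  ring

lemma le_of_p8f {x y N : ℝ} (hN : 0 ≤ N) (h : p8f x y ≤ N ^ 8) : y ≤ N := by
  have h1 : y ^ 8 ≤ N ^ 8 := by
    have : 0 ≤ x ^ 8 + 14 * x ^ 4 * y ^ 4 := by positivity
    unfold p8f at h; linarith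
  by_contra hc
  push Not at hc
  exact absurd h1 (not_le.2 (pow_lt_pow_left₀ hc hN (by norm_num)))

lemma count_line (v Y : ℝ) (j : ℤ) :
    |((Finset.Icc ⌈(v - j) / 2⌉ ⌊(Y - j) / 2⌋).card : ℝ) - max 0 (Y - v) / 2| ≤ 1 := by
  rw [Int.card_Icc]
  set a := ⌈(v - j) / 2⌉
  set b := ⌊(Y - j) / 2⌋
  have a1 : (v - j) / 2 ≤ a := Int.le_ceil _
  have a2 : (a:ℝ) < (v - j) / 2 + 1 := Int.ceil_lt_add_one _
  have b1 : (b:ℝ) ≤ (Y - j) / 2 := Int.floor_le _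
  have b2 : (Y - j) / 2 < b + 1 := Int.lt_floor_add_one _
  rcases le_total v Y with h | h
  · have h0 : 0 ≤ b + 1 - a := by
      have : (-1:ℝ) < ((b + 1 - a : ℤ) : ℝ) := by push_cast; linarith
      have : (-1:ℤ) < b + 1 - a := by exact_mod_cast this
      omega
    have hc : (((b + 1 - a).toNat : ℕ) : ℝ) = b + 1 - a := by
      have : (((b + 1 - a).toNat : ℤ) : ℝ) = ((b + 1 - a : ℤ) : ℝ) := by rw [Int.toNat_of_nonneg h0]
      push_cast at this; exact_mod_cast this
    rw [hc, max_eq_right (by linarith), abs_le]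
    constructor <;> linarith
  · have h0 : b + 1 - a ≤ 1 := by
      have : ((b + 1 - a : ℤ) : ℝ) ≤ 1 := by push_cast; linarith
      exact_mod_cast this
    have h1 : (b + 1 - a).toNat ≤ 1 := by omega
    have h2 : (((b + 1 - a).toNat : ℕ) : ℝ) ≤ 1 := by exact_mod_cast h1
    rw [max_eq_left (by linarith), abs_le]
    constructor <;> simp <;> linarith [Nat.cast_nonneg (α := ℝ) ((b + 1 - a).toNat)]

lemma L_eq {i j : ℤ} (hi : i = 0 ∨ i = 1) (hj : j = 0 ∨ j = 1) {N : ℝ} (hN : 1 ≤ N) :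
    L i j (N ^ 8) = ∑ k ∈ Finset.range (⌊N⌋₊ + 1),
      (Finset.Icc ⌈(((2 * k + i : ℝ)) - j) / 2⌉ ⌊(Yf (N ^ 8) (2 * k + i) - j) / 2⌋).card := by
  unfold L
  rw [← Finset.card_sigma, ← Set.ncard_coe_finset]
  have hinj : Function.Injective (fun p : (Σ _ : ℕ, ℤ) => ((2 * (p.1 : ℤ) + i, 2 * p.2 + j) : ℤ × ℤ)) := by
    rintro ⟨a, b⟩ ⟨c, d⟩ h
    simp only [Prod.mk.injEq] at h
    have h1 : a = c := by omega
    have h2 : b = d := by omega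
    subst h1; subst h2; rfl
  rw [← Set.ncard_image_of_injective _ hinj]
  congr 1
  ext ⟨v, w⟩
  simp only [Set.mem_ofPred_eq, Set.mem_image, Finset.mem_coe, Finset.mem_sigma, Finset.mem_range,
    Finset.mem_Icc, Sigma.exists, Prod.mk.injEq, Int.ceil_le, Int.le_floor]
  have hz : (0:ℝ) ≤ N ^ 8 := by positivity
  have hi0 : (0:ℝ) ≤ i := by rcases hi with h | h <;> simp [h]
  constructor
  · rintro ⟨h0, hvw, hp, hvi, hwj⟩
    have hv' : (0:ℝ) ≤ v := by exact_mod_cast h0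
    have hvw' : (v:ℝ) ≤ w := by exact_mod_cast hvw
    have hvk : v = 2 * ((v / 2).toNat : ℤ) + i := by omega
    have hwl : w = 2 * (w / 2) + j := by omega
    have hvR : (v:ℝ) = 2 * ((v / 2).toNat : ℝ) + i := by
      have : (v:ℝ) = ((2 * ((v / 2).toNat : ℤ) + i : ℤ) : ℝ) := by rw [← hvk]
      push_cast at this; exact_mod_cast this
    have hwR : (w:ℝ) = 2 * ((w / 2 : ℤ) : ℝ) + j := by
      have : (w:ℝ) = ((2 * (w / 2) + j : ℤ) : ℝ) := by rw [← hwl]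
      rw [this, Int.cast_add, Int.cast_mul, Int.cast_ofNat]
    refine ⟨(v / 2).toNat, w / 2, ⟨?_, ?_, ?_⟩, hvk.symm, hwl.symm⟩
    · rw [Nat.lt_succ_iff]
      apply Nat.le_floor
      have := le_of_p8f (by linarith) hp
      have : (0:ℝ) ≤ ((v / 2).toNat : ℝ) := Nat.cast_nonneg _
      linarith
    · rw [← hvR]; linarith
    · rw [← hvR]
      have := (le_Yf hv' hvw' hz).1 hp
      linarith
  · rintro ⟨k, l, ⟨hk, h1, h2⟩, hv, hw⟩
    have hvR : (v:ℝ) = 2 * (k : ℝ) + i := by rw [← hv]; push_cast; ring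
    have hwR : (w:ℝ) = 2 * (l : ℝ) + j := by rw [← hw]; push_cast; ring
    rw [← hvR] at h1 h2
    have hvw : (v:ℝ) ≤ w := by linarith
    have hv0 : 0 ≤ v := by omega
    refine ⟨hv0, by exact_mod_cast hvw, ?_, by omega, by omega⟩
    rw [le_Yf (by exact_mod_cast hv0) hvw hz]
    linarith

lemma L_bound {i j : ℤ} (hi : i = 0 ∨ i = 1) (hj : j = 0 ∨ j = 1) {N : ℝ} (hN : 1 ≤ N) :
    |(L i j (N ^ 8) : ℝ) - (1 / 2 * ∫ s in (0:ℝ)..1, (p8f s 1) ^ (-(1 : ℝ) / 4)) / 4 * N ^ 2| ≤ 3 * N := by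
  have hz : (0:ℝ) ≤ N ^ 8 := by positivity
  rw [L_eq hi hj hN]
  set M := ⌊N⌋₊ + 1 with hM
  have hM1 : (M:ℝ) ≤ N + 1 := by
    have := Nat.floor_le (show 0 ≤ N by linarith)
    simp only [hM]; push_cast; linarith
  have hM2 : N ≤ M := by
    have := Nat.lt_floor_add_one N
    simp only [hM]; push_cast; linarith
  have s1 : |((∑ k ∈ Finset.range M,
      (Finset.Icc ⌈(((2 * k + i : ℝ)) - j) / 2⌉ ⌊(Yf (N ^ 8) (2 * k + i) - j) / 2⌋).card : ℕ) : ℝ)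
      - ∑ k ∈ Finset.range M, ell (N ^ 8) (2 * k + i) / 2| ≤ M := by
    push_cast
    rw [← Finset.sum_sub_distrib]
    refine (Finset.abs_sum_le_sum_abs _ _).trans ?_
    refine (Finset.sum_le_sum (fun (k : ℕ) _ => count_line (2 * (k : ℝ) + i) (Yf (N ^ 8) (2 * (k : ℝ) + i)) j)).trans ?_
    simp
  have hanti := ell_anti hz
  have hg : AntitoneOn (fun x => ell (N ^ 8) (2 * x)) (Set.Icc (0:ℝ) (0 + M)) := by
    intro a ha b hb hab
    exact hanti (show (0:ℝ) ≤ 2 * a by linarith [ha.1]) (show (0:ℝ) ≤ 2 * b by linarith [hb.1]) (by linarith)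
  have u1 := hg.integral_le_sum
  have u2 := hg.sum_le_integral
  simp only [zero_add] at u1 u2
  have hint : ∫ x in (0:ℝ)..M, ell (N ^ 8) (2 * x) = 1 / 2 * ∫ x in (0:ℝ)..(2 * M), ell (N ^ 8) x := by
    rw [intervalIntegral.integral_comp_mul_left _ (by norm_num)]
    simp
  rw [area (by linarith) (by linarith)] at hint
  rw [hint] at u1 u2
  have htel : ∑ k ∈ Finset.range M, ell (N ^ 8) (2 * (k:ℝ)) ≤
      ∑ k ∈ Finset.range M, ell (N ^ 8) (2 * ((k + 1 : ℕ):ℝ)) + N := by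
    have h1 := Finset.sum_range_succ (fun k : ℕ => ell (N ^ 8) (2 * (k:ℝ))) M
    have h2 := Finset.sum_range_succ' (fun k : ℕ => ell (N ^ 8) (2 * (k:ℝ))) M
    have h3 := ell_nonneg (N ^ 8) (2 * (M:ℝ))
    have h4 : ell (N ^ 8) (2 * ((0:ℕ):ℝ)) = N := by simp [ell_zero (show 0 ≤ N by linarith)]
    rw [h4] at h2
    linarith
  have hi0 : (0:ℝ) ≤ i := by rcases hi with h | h <;> simp [h]
  have hi2 : (i:ℝ) ≤ 2 := by rcases hi with h | h <;> simp [h]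
  have c1 : ∑ k ∈ Finset.range M, ell (N ^ 8) (2 * (k:ℝ) + i) ≤ ∑ k ∈ Finset.range M, ell (N ^ 8) (2 * (k:ℝ)) := by
    apply Finset.sum_le_sum
    intro k _
    exact hanti (show (0:ℝ) ≤ _ by positivity) (show (0:ℝ) ≤ _ by positivity) (by linarith)
  have c2 : ∑ k ∈ Finset.range M, ell (N ^ 8) (2 * ((k + 1 : ℕ):ℝ)) ≤ ∑ k ∈ Finset.range M, ell (N ^ 8) (2 * (k:ℝ) + i) := by
    apply Finset.sum_le_sum
    intro k _
    exact hanti (show (0:ℝ) ≤ _ by positivity) (show (0:ℝ) ≤ _ by positivity) (by push_cast; linarith)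
  rw [← Finset.sum_div] at s1
  rw [abs_le] at s1 ⊢
  constructor <;> linarith [s1.1, s1.2]

open ArithmeticFunction in
lemma hasSum_odd {z2 : ℝ} (hz2 : (z2 : ℂ) = riemannZeta 2) :
    HasSum (fun n : ℕ => if Odd n then (moebius n : ℝ) / n ^ 2 else 0) (4 / (3 * z2)) := by
  have h1 := DirichletCharacter.LSeries.mul_mu_eq_one (1 : DirichletCharacter ℂ 2) (s := 2) (by norm_num)
  have h2 := DirichletCharacter.LFunctionTrivChar_eq_mul_riemannZeta (N := 2) (s := 2) (by norm_num)
  rw [DirichletCharacter.LFunctionTrivChar, DirichletCharacter.LFunction_eq_LSeries _ (by norm_num)] at h2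
  rw [h2, Nat.prime_two.primeFactors, Finset.prod_singleton, ← hz2] at h1
  have hs := DirichletCharacter.LSeriesSummable_mul (1 : DirichletCharacter ℂ 2)
    (ArithmeticFunction.LSeriesSummable_moebius_iff.mpr (show 1 < (2:ℂ).re by norm_num))
  have hsum := hs.LSeriesHasSum
  unfold LSeriesHasSum at hsum
  have hz0 : (z2:ℂ) ≠ 0 := by
    intro h; rw [h] at h1; simp at h1
  have e2 : (1 - ((2:ℕ):ℂ) ^ (-2:ℂ)) = 3 / 4 := by
    rw [Complex.cpow_neg]; norm_num
  rw [e2] at h1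
  have hval : LSeries ((fun n : ℕ => (1 : DirichletCharacter ℂ 2) n) * fun n : ℕ => ((moebius n : ℤ) : ℂ)) 2 = ((4 / (3 * z2) : ℝ) : ℂ) := by
    push_cast
    field_simp
    linear_combination 4 * h1
  rw [hval] at hsum
  rw [← Complex.hasSum_ofReal]
  convert hsum using 1
  ext n
  rcases eq_or_ne n 0 with rfl | hn
  · simp
  rw [LSeries.term_of_ne_zero hn]
  simp only [Pi.mul_apply]
  have e3 : (n:ℂ) ^ (2:ℂ) = (n:ℂ) ^ 2 := by norm_cast
  rw [e3]
  split_ifs with h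
  · have : IsUnit ((n : ℕ) : ZMod 2) := by
      rw [ZMod.isUnit_iff_coprime]
      exact Nat.coprime_two_right.2 h
    rw [MulChar.one_apply this]
    push_cast; ring
  · have : ¬ IsUnit ((n : ℕ) : ZMod 2) := by
      rw [ZMod.isUnit_iff_coprime]
      exact fun hh => h (Nat.coprime_two_right.1 hh)
    rw [MulChar.map_nonunit _ this]
    simp

open ArithmeticFunction in
lemma tail_odd {z2 : ℝ} (hz2 : (z2 : ℂ) = riemannZeta 2) (D : ℕ) :
    |∑ d ∈ (Finset.Icc 1 D).filter Odd, (moebius d : ℝ) / d ^ 2 - 4 / (3 * z2)| ≤ 2 / (D + 1) := by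
  have h := (hasSum_odd hz2).tendsto_sum_nat
  set a : ℕ → ℝ := fun n : ℕ => if Odd n then (moebius n : ℝ) / n ^ 2 else 0 with ha
  have e0 : ∑ d ∈ (Finset.Icc 1 D).filter Odd, (moebius d : ℝ) / d ^ 2 = ∑ d ∈ Finset.range (D + 1), a d := by
    rw [Finset.sum_filter]
    apply Finset.sum_subset
    · intro x hx; simp at hx ⊢; omega
    · intro x hx hx2
      have : x = 0 := by simp at hx hx2; omega
      simp [this]
  rw [e0, abs_sub_comm]
  refine le_of_tendsto ((h.sub_const _).abs) ?_
  filter_upwards [Filter.eventually_ge_atTop (D + 1)] with n hn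
  rw [← Finset.sum_Ico_eq_sub _ hn]
  refine (Finset.abs_sum_le_sum_abs _ _).trans ?_
  refine le_trans ?_ (sum_Ioo_inv_sq_le (α := ℝ) D n)
  have : Finset.Ico (D + 1) n = Finset.Ioo D n := by ext; simp
  rw [this]
  apply Finset.sum_le_sum
  intro d _
  change |if Odd d then (moebius d : ℝ) / d ^ 2 else 0| ≤ _
  split_ifs
  · rw [abs_div, abs_of_nonneg (show (0:ℝ) ≤ (d:ℝ) ^ 2 by positivity), div_eq_mul_inv]
    have : |(moebius d : ℝ)| ≤ 1 := by exact_mod_cast abs_moebius_le_one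
    have h3 : (0:ℝ) ≤ ((d:ℝ) ^ 2)⁻¹ := by positivity
    nlinarith
  · simp

lemma L_set_finite (i j : ℤ) {N : ℝ} (hN : 0 ≤ N) : {q : ℤ × ℤ | 0 ≤ q.1 ∧ q.1 ≤ q.2 ∧ p8f q.1 q.2 ≤ N ^ 8 ∧
    q.1 % 2 = i ∧ q.2 % 2 = j}.Finite := by
  apply (Set.finite_Icc ((0, 0) : ℤ × ℤ) (⌊N⌋, ⌊N⌋)).subset
  rintro ⟨v, w⟩ ⟨h0, h1, h2, -, -⟩
  have := Int.le_floor.2 (le_of_p8f hN h2)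
  simp only at h0 h1 this
  simp only [Set.mem_Icc, Prod.mk_le_mk]
  omega

lemma L_scale (i j : ℤ) {N : ℝ} (hN : 0 ≤ N) {d : ℕ} (hd : Odd d) :
    L i j ((N / d) ^ 8) = ((L_set_finite i j hN).toFinset.filter (fun q => d ∣ Int.gcd q.1 q.2)).card := by
  unfold L
  have hd0 : (d:ℤ) ≠ 0 := by have := hd.pos; omega
  have hdp : (0:ℝ) < d := by exact_mod_cast hd.pos
  have hinj : Function.Injective (fun q : ℤ × ℤ => (((d:ℤ) * q.1, (d:ℤ) * q.2) : ℤ × ℤ)) := by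
    rintro ⟨a, b⟩ ⟨c, e⟩ h
    simp only [Prod.mk.injEq] at h
    rw [mul_left_cancel₀ hd0 h.1, mul_left_cancel₀ hd0 h.2]
  have hmod : ∀ x : ℤ, ((d:ℤ) * x) % 2 = x % 2 := by
    intro x
    have : (d:ℤ) % 2 = 1 := by have := Nat.odd_iff.1 hd; omega
    rw [Int.mul_emod, this]; simp
  have hp : ∀ x y : ℝ, p8f (d * x) (d * y) ≤ N ^ 8 ↔ p8f x y ≤ (N / d) ^ 8 := by
    intro x y
    rw [div_pow, le_div_iff₀ (by positivity)]
    have : p8f (d * x) (d * y) = p8f x y * d ^ 8 := by unfold p8f; ring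
    rw [this]
  rw [← Set.ncard_coe_finset, ← Set.ncard_image_of_injective _ hinj]
  congr 1
  ext ⟨v, w⟩
  simp only [Set.mem_image, Set.mem_ofPred_eq, Finset.coe_filter, Set.Finite.mem_toFinset, Prod.exists, Prod.mk.injEq]
  constructor
  · rintro ⟨a, b, ⟨h0, h1, h2, h3, h4⟩, rfl, rfl⟩
    refine ⟨⟨by positivity, by gcongr, ?_, by rw [hmod]; exact h3, by rw [hmod]; exact h4⟩, ?_⟩
    · push_cast; rw [hp]; exact h2
    · rw [Int.gcd_mul_left]; simp
  · rintro ⟨⟨h0, h1, h2, h3, h4⟩, h5⟩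
    have h5' : (d:ℤ) ∣ Int.gcd v w := by exact_mod_cast h5
    obtain ⟨a, rfl⟩ := h5'.trans (Int.gcd_dvd_left ..)
    obtain ⟨b, rfl⟩ := h5'.trans (Int.gcd_dvd_right ..)
    rw [hmod] at h3 h4
    push_cast at h2
    rw [hp] at h2
    have hdz : (0:ℤ) < d := by exact_mod_cast hd.pos
    exact ⟨a, b, ⟨nonneg_of_mul_nonneg_right h0 hdz, le_of_mul_le_mul_left h1 hdz, h2, h3, h4⟩, rfl, rfl⟩

open ArithmeticFunction in
lemma L'_eq {i j : ℤ} (hi : i = 0 ∨ i = 1) (hj : j = 0 ∨ j = 1) (hij : ¬(i = 0 ∧ j = 0)) {N : ℝ} (hN : 1 ≤ N) :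
    (L' i j (N ^ 8) : ℤ) = ∑ d ∈ (Finset.Icc 1 ⌊N⌋₊).filter Odd, moebius d * (L i j ((N / d) ^ 8) : ℤ) := by
  have hN0 : 0 ≤ N := by linarith
  have e1 : L' i j (N ^ 8) = ((L_set_finite i j hN0).toFinset.filter (fun q => Int.gcd q.1 q.2 = 1)).card := by
    unfold L'
    rw [← Set.ncard_coe_finset]
    congr 1
    ext ⟨v, w⟩
    simp [and_assoc]
  have e2 : ∑ d ∈ (Finset.Icc 1 ⌊N⌋₊).filter Odd, moebius d * (L i j ((N / d) ^ 8) : ℤ) =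
      ∑ d ∈ (Finset.Icc 1 ⌊N⌋₊).filter Odd, ∑ q ∈ (L_set_finite i j hN0).toFinset,
        if d ∣ Int.gcd q.1 q.2 then moebius d else 0 := by
    apply Finset.sum_congr rfl
    intro d hd
    rw [L_scale i j hN0 (Finset.mem_filter.1 hd).2, ← Finset.sum_filter, Finset.sum_const, nsmul_eq_mul, mul_comm]
  rw [e1, e2, Finset.sum_comm, Finset.card_filter]
  push_cast
  apply Finset.sum_congr rfl
  rintro ⟨v, w⟩ hq
  simp only [Set.Finite.mem_toFinset, Set.mem_ofPred_eq] at hq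
  obtain ⟨h0, h1, h2, h3, h4⟩ := hq
  have hw : 0 < w := by omega
  have hg := congrArg (fun f => f (Int.gcd v w)) moebius_mul_coe_zeta
  simp only [coe_mul_zeta_apply, one_apply] at hg
  rw [← hg, ← Finset.sum_filter]
  apply Finset.sum_congr _ (fun _ _ => rfl)
  ext d
  have hg0 : Int.gcd v w ≠ 0 := by
    intro h; rw [Int.gcd_eq_zero_iff] at h; omega
  simp only [Nat.mem_divisors, Finset.mem_filter, Finset.mem_Icc]
  constructor
  · rintro ⟨hd, -⟩
    have hd' : (d:ℤ) ∣ Int.gcd v w := by exact_mod_cast hd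
    have dv := hd'.trans (Int.gcd_dvd_left ..)
    have dw := hd'.trans (Int.gcd_dvd_right ..)
    refine ⟨⟨⟨Nat.pos_of_dvd_of_pos hd (Nat.pos_of_ne_zero hg0), ?_⟩, ?_⟩, hd⟩
    · apply Nat.le_floor
      have h5 := Int.le_of_dvd hw dw
      have h6 : (d:ℝ) ≤ w := by exact_mod_cast h5
      exact h6.trans (le_of_p8f hN0 h2)
    · rw [← Nat.not_even_iff_odd]
      intro he
      have h2d : (2:ℤ) ∣ d := by exact_mod_cast he.two_dvd
      have := h2d.trans dv
      have := h2d.trans dw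
      omega
  · rintro ⟨-, hd⟩
    exact ⟨hd, hg0⟩

open ArithmeticFunction in
lemma L'_bound {z2 : ℝ} (hz2 : (z2 : ℂ) = riemannZeta 2)
    {i j : ℤ} (hi : i = 0 ∨ i = 1) (hj : j = 0 ∨ j = 1) (hij : ¬(i = 0 ∧ j = 0)) {β : ℝ}
    (hβ : ∀ N : ℝ, 1 ≤ N → |(L i j (N ^ 8) : ℝ) - β / 4 * N ^ 2| ≤ 3 * N) {N : ℝ} (hN : 1 ≤ N) :
    |(L' i j (N ^ 8) : ℝ) - β / (3 * z2) * N ^ 2| ≤ 3 * N * (1 + log N) + |β| * N := by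
  have e := L'_eq hi hj hij hN
  have e' : (L' i j (N ^ 8) : ℝ) = ∑ d ∈ (Finset.Icc 1 ⌊N⌋₊).filter Odd, (moebius d : ℝ) * (L i j ((N / d) ^ 8) : ℝ) := by
    exact_mod_cast congrArg (Int.cast : ℤ → ℝ) e
  have t := tail_odd hz2 ⌊N⌋₊
  set S := (Finset.Icc 1 ⌊N⌋₊).filter Odd with hS
  have b1 : |∑ d ∈ S, (moebius d : ℝ) * (L i j ((N / d) ^ 8) : ℝ) -
      β / 4 * N ^ 2 * ∑ d ∈ S, (moebius d : ℝ) / d ^ 2| ≤ 3 * N * (1 + log N) := by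
    rw [Finset.mul_sum, ← Finset.sum_sub_distrib]
    refine (Finset.abs_sum_le_sum_abs _ _).trans ?_
    have h1 : ∀ d ∈ S, |(moebius d : ℝ) * (L i j ((N / d) ^ 8) : ℝ) - β / 4 * N ^ 2 * ((moebius d : ℝ) / d ^ 2)| ≤ 3 * N * (d:ℝ)⁻¹ := by
      intro d hd
      simp only [hS, Finset.mem_filter, Finset.mem_Icc] at hd
      have hd0 : (0:ℝ) < d := by exact_mod_cast hd.1.1
      have hdN : (d:ℝ) ≤ N := (Nat.le_floor_iff (by linarith)).1 hd.1.2
      have := hβ (N / d) (by rw [le_div_iff₀ hd0]; linarith)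
      have hr : (moebius d : ℝ) * (L i j ((N / d) ^ 8) : ℝ) - β / 4 * N ^ 2 * ((moebius d : ℝ) / d ^ 2) =
        (moebius d : ℝ) * ((L i j ((N / d) ^ 8) : ℝ) - β / 4 * (N / d) ^ 2) := by field_simp
      rw [hr, abs_mul]
      have hm : |(moebius d : ℝ)| ≤ 1 := by exact_mod_cast abs_moebius_le_one
      calc _ ≤ 1 * (3 * (N / d)) := by gcongr
        _ = _ := by field_simp
    refine (Finset.sum_le_sum h1).trans ?_
    rw [← Finset.mul_sum]
    gcongr
    refine le_trans ?_ (harmonic_floor_le_one_add_log N hN)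
    rw [harmonic_eq_sum_Icc]
    push_cast
    apply Finset.sum_le_sum_of_subset_of_nonneg (Finset.filter_subset _ _)
    intros; positivity
  have t2 : (2:ℝ) / (⌊N⌋₊ + 1) ≤ 2 / N := by
    have := Nat.lt_floor_add_one N
    gcongr
  have b2 : |β / 4 * N ^ 2 * ∑ d ∈ S, (moebius d : ℝ) / d ^ 2 - β / (3 * z2) * N ^ 2| ≤ |β| * N := by
    have hr : β / 4 * N ^ 2 * ∑ d ∈ S, (moebius d : ℝ) / d ^ 2 - β / (3 * z2) * N ^ 2 =
      β / 4 * N ^ 2 * (∑ d ∈ S, (moebius d : ℝ) / d ^ 2 - 4 / (3 * z2)) := by ring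
    rw [hr, abs_mul, abs_mul, abs_div, abs_of_nonneg (show (0:ℝ) ≤ N ^ 2 by positivity)]
    calc _ ≤ |β| / |4| * N ^ 2 * (2 / N) := by gcongr; exact t.trans t2
      _ = |β| * N / 2 := by
        rw [abs_of_nonneg (by norm_num : (0:ℝ) ≤ 4)]; field_simp; norm_num
      _ ≤ _ := by have : 0 ≤ |β| * N := by positivity
                  linarith
  rw [e']
  exact (abs_sub_le _ _ _).trans (add_le_add b1 b2)

theorem stmt15 (z2 : ℝ) (hz2 : (z2 : ℂ) = riemannZeta 2) (β : ℝ)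
    (hβ : β = (1 / 2) * ∫ θ in (π / 4)..(π / 2),
      (p8f 1 (Real.tan θ)) ^ (-(1 : ℝ) / 4) * (Real.cos θ) ^ (-(2 : ℝ)))
    (i j : ℤ) (hi : i = 0 ∨ i = 1) (hj : j = 0 ∨ j = 1) (hij : ¬(i = 0 ∧ j = 0)) :
    ∃ C > 0, ∀ z : ℝ, 2 ≤ z →
      |(L i j z : ℝ) - (β / 4) * z ^ ((1 : ℝ) / 4)| ≤ C * z ^ ((1 : ℝ) / 8) ∧
      |(L' i j z : ℝ) - (β / (3 * z2)) * z ^ ((1 : ℝ) / 4)| ≤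
        C * z ^ ((1 : ℝ) / 8) * Real.log z := by
  rw [beta_eq] at hβ
  have hb : ∀ N : ℝ, 1 ≤ N → |(L i j (N ^ 8) : ℝ) - β / 4 * N ^ 2| ≤ 3 * N := by
    intro N hN; rw [hβ]; exact L_bound hi hj hN
  refine ⟨10 + 2 * |β|, by positivity, fun z hz => ?_⟩
  have hz0 : 0 ≤ z := by linarith
  set N := z ^ ((1:ℝ) / 8) with hNdef
  have hN : 1 ≤ N := Real.one_le_rpow (by linarith) (by norm_num)
  have hN8 : N ^ 8 = z := by
    rw [hNdef, ← Real.rpow_natCast, ← Real.rpow_mul hz0]; norm_num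
  have hN2 : z ^ ((1:ℝ) / 4) = N ^ 2 := by
    rw [hNdef, ← Real.rpow_natCast, ← Real.rpow_mul hz0]; norm_num
  have hlog : log N = log z / 8 := by
    rw [hNdef, Real.log_rpow (by linarith)]; ring
  have hlz : 1 / 2 ≤ log z := by
    have := Real.log_two_gt_d9
    have := Real.log_le_log (by norm_num) hz
    linarith
  have hab := abs_nonneg β
  have h1 := hb N hN
  have h2 := L'_bound hz2 hi hj hij hb hN
  rw [hN8] at h1 h2
  rw [hN2]
  refine ⟨h1.trans ?_, h2.trans ?_⟩
  · nlinarith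
  · rw [hlog]
    have a1 : 3 * (1 + log z / 8) + |β| ≤ (10 + 2 * |β|) * log z := by nlinarith
    calc _ = N * (3 * (1 + log z / 8) + |β|) := by ring
      _ ≤ N * ((10 + 2 * |β|) * log z) := by gcongr
      _ = _ := by ring
end

section
/- Let M(t) = Σ_{n ≤ t} μ(n) and M₃(x) = Σ_{n ≤ x, 3 ∣ n} μ(n), where μ is the Möbius function. Then for every real x ≥ 0, M₃(x) = −Σ_{j ≥ 1} M(x/3^j) (the sum on the right has only finitely many nonzero terms, since M(t) = 0 for t < 1). -/
open ArithmeticFunction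

/-- M(t) = Σ_{n ≤ t} μ(n), the Mertens function. -/
noncomputable def M (t : ℝ) : ℤ :=
  ∑ n ∈ Finset.Icc 1 ⌊t⌋₊, moebius n

/-- M₃(x) = Σ_{n ≤ x, 3 ∣ n} μ(n). -/
noncomputable def M₃ (x : ℝ) : ℤ :=
  ∑ n ∈ (Finset.Icc 1 ⌊x⌋₊).filter (fun n => 3 ∣ n), moebius n

lemma moebius_three_mul (m : ℕ) :
    moebius (3 * m) = if 3 ∣ m then 0 else - moebius m := by
  split_ifs with h
  · apply moebius_eq_zero_of_not_squarefree
    intro hs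
    obtain ⟨k, rfl⟩ := h
    have := hs 3 ⟨k, by ring⟩
    simp at this
  · have hc : Nat.Coprime 3 m := (Nat.Prime.coprime_iff_not_dvd Nat.prime_three).2 h
    rw [isMultiplicative_moebius.map_mul_of_coprime hc, moebius_apply_prime Nat.prime_three]
    ring

lemma M₃_step (x : ℝ) : M₃ x = M₃ (x / 3) - M (x / 3) := by
  have hf : ⌊x / 3⌋₊ = ⌊x⌋₊ / 3 := by
    exact_mod_cast Nat.floor_div_natCast x 3
  unfold M₃ M
  rw [hf]
  generalize ⌊x⌋₊ = N
  have h1 : (Finset.Icc 1 N).filter (fun n => 3 ∣ n)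
      = (Finset.Icc 1 (N / 3)).image (fun m => 3 * m) := by
    ext n
    simp only [Finset.mem_filter, Finset.mem_Icc, Finset.mem_image]
    constructor
    · rintro ⟨⟨a, b⟩, k, rfl⟩
      exact ⟨k, by omega, rfl⟩
    · rintro ⟨k, hk, rfl⟩
      exact ⟨by omega, k, rfl⟩
  rw [h1, Finset.sum_image (by intro a _ b _ h; simpa using h), Finset.sum_filter,
    ← Finset.sum_sub_distrib]
  refine Finset.sum_congr rfl fun m _ => ?_
  rw [moebius_three_mul]
  split_ifs <;> simp

lemma M₃_iter (x : ℝ) (k : ℕ) :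
    M₃ x = M₃ (x / 3 ^ k) - ∑ j ∈ Finset.range k, M (x / 3 ^ (j + 1)) := by
  induction k with
  | zero => simp
  | succ k ih =>
    rw [ih, Finset.sum_range_succ, M₃_step (x / 3 ^ k), div_div, ← pow_succ]
    ring

theorem stmt17 (x : ℝ) (hx : 0 ≤ x) :
    M₃ x = -∑' j : ℕ, M (x / 3 ^ (j + 1)) := by
  obtain ⟨k, hk⟩ := pow_unbounded_of_one_lt x (by norm_num : (1 : ℝ) < 3)
  have hfl : ∀ j, k ≤ j → ⌊x / 3 ^ j⌋₊ = 0 := by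
    intro j hj
    rw [Nat.floor_eq_zero, div_lt_one (by positivity)]
    exact hk.trans_le (pow_le_pow_right₀ (by norm_num) hj)
  rw [tsum_eq_sum (s := Finset.range k), M₃_iter x k]
  · simp [M₃, hfl k le_rfl]
  · intro j hj
    simp only [Finset.mem_range, not_lt] at hj
    simp [M, hfl (j + 1) (by omega)]
end

section
/- The identity 2β = α₃ + α₄ holds, where β = (1/2)∫_{π/4}^{π/2} (p₈(1, tan θ))^{−1/4}·(cos θ)^{−2} dθ, α₃ = ∫₀¹ (p₈(u,1))^{−1/2} du, and α₄ = ∫₁² ∫_{g(t)}¹ (p₈(u,1))^{−1/2} du dt with g(t) = ((t⁴ + 48)^{1/2} − 7)^{1/4}. -/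
open Real

lemma p8f_pos (u : ℝ) : 0 < p8f u 1 := by unfold p8f; positivity

lemma p8f_cont : Continuous (fun u : ℝ => p8f u 1) := by unfold p8f; fun_prop

lemma rpow_cont (r : ℝ) : Continuous (fun u : ℝ => (p8f u 1) ^ r) :=
  p8f_cont.rpow_const (fun u => Or.inl (p8f_pos u).ne')

lemma sqrt_eq_rp (u : ℝ) : 1 / Real.sqrt (p8f u 1) = (p8f u 1) ^ (-(1 : ℝ) / 2) := by
  rw [Real.sqrt_eq_rpow, one_div, ← Real.rpow_neg (p8f_pos u).le]; norm_num

lemma beta_aux : (∫ θ in (π / 4)..(π / 2),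
      (p8f 1 (Real.tan θ)) ^ (-(1 : ℝ) / 4) * (Real.cos θ) ^ (-(2 : ℝ)))
      = ∫ u in (0 : ℝ)..1, (p8f u 1) ^ (-(1 : ℝ) / 4) := by
  have h1 := intervalIntegral.integral_comp_sub_left (a := 0) (b := π / 4) (fun θ =>
    (p8f 1 (Real.tan θ)) ^ (-(1 : ℝ) / 4) * (Real.cos θ) ^ (-(2 : ℝ))) (π / 2)
  rw [show π / 2 - π / 4 = π / 4 by ring, sub_zero] at h1
  rw [← h1]
  have hcos : ∀ x ∈ Set.uIcc 0 (π / 4), 0 < Real.cos x := by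
    intro x hx
    rw [Set.uIcc_of_le (by positivity)] at hx
    exact Real.cos_pos_of_mem_Ioo ⟨by linarith [hx.1, Real.pi_pos], by linarith [hx.2, Real.pi_pos]⟩
  have h2 := intervalIntegral.integral_comp_mul_deriv (a := 0) (b := π / 4) (f := Real.tan)
    (f' := fun x => 1 / Real.cos x ^ 2) (g := fun u => (p8f u 1) ^ (-(1 : ℝ) / 4))
    (fun x hx => Real.hasDerivAt_tan (hcos x hx).ne')
    (by
      apply ContinuousOn.div continuousOn_const (by fun_prop)
      intro x hx
      exact pow_ne_zero _ (hcos x hx).ne')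
    (rpow_cont _)
  rw [Real.tan_zero, Real.tan_pi_div_four] at h2
  rw [← h2]
  apply intervalIntegral.integral_congr_ae
  refine Filter.Eventually.of_forall fun x hx => ?_
  have hc := hcos x (Set.uIoc_subset_uIcc hx)
  rw [Set.uIoc_of_le (by positivity)] at hx
  have hs : 0 < Real.sin x :=
    Real.sin_pos_of_pos_of_lt_pi hx.1 (by linarith [hx.2, Real.pi_pos])
  have ht : 0 < Real.tan x := by rw [Real.tan_eq_sin_div_cos]; positivity
  simp only [Function.comp]
  rw [Real.tan_pi_div_two_sub, Real.cos_pi_div_two_sub]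
  have e1 : p8f 1 (Real.tan x)⁻¹ = p8f (Real.tan x) 1 * ((Real.tan x) ^ (8 : ℝ))⁻¹ := by
    have : (Real.tan x) ^ (8 : ℝ) = (Real.tan x) ^ 8 := by
      rw [← Real.rpow_natCast]; norm_num
    rw [this]; unfold p8f; field_simp
  rw [e1, Real.mul_rpow (p8f_pos _).le (by positivity), ← Real.rpow_neg ht.le,
    ← Real.rpow_mul ht.le, mul_assoc]
  congr 1
  rw [show (-8 : ℝ) * (-1 / 4) = ((2 : ℕ) : ℝ) by norm_num, Real.rpow_natCast,
    Real.rpow_neg hs.le, show (2 : ℝ) = ((2 : ℕ) : ℝ) by norm_num, Real.rpow_natCast,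
    Real.tan_eq_sin_div_cos]
  field_simp

lemma g_inv (u : ℝ) (hu : 0 ≤ u) :
    (Real.sqrt (((p8f u 1) ^ ((1 : ℝ) / 4)) ^ 4 + 48) - 7) ^ ((1 : ℝ) / 4) = u := by
  have h : ((p8f u 1) ^ ((1 : ℝ) / 4)) ^ 4 = p8f u 1 := by
    rw [← Real.rpow_natCast, ← Real.rpow_mul (p8f_pos u).le]; norm_num
  rw [h, show p8f u 1 + 48 = (u ^ 4 + 7) ^ 2 by unfold p8f; ring,
    Real.sqrt_sq (by positivity), add_sub_cancel_right, ← Real.rpow_natCast,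
    ← Real.rpow_mul hu]
  norm_num

lemma alpha_aux (g : ℝ → ℝ)
    (hg : ∀ t, g t = (Real.sqrt (t ^ 4 + 48) - 7) ^ ((1 : ℝ) / 4)) :
    (∫ t in (1 : ℝ)..2, ∫ u in g t..1, (p8f u 1) ^ (-(1 : ℝ) / 2)) =
      (∫ u in (0 : ℝ)..1, (p8f u 1) ^ (-(1 : ℝ) / 4))
      - ∫ u in (0 : ℝ)..1, (p8f u 1) ^ (-(1 : ℝ) / 2) := by
  have hFc := rpow_cont (-(1 : ℝ) / 2)
  have hGd : ∀ v, HasDerivAt (fun v => ∫ u in v..1, (p8f u 1) ^ (-(1 : ℝ) / 2))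
      (-(p8f v 1) ^ (-(1 : ℝ) / 2)) v := fun v =>
    intervalIntegral.integral_hasDerivAt_left (hFc.intervalIntegrable _ _)
      (hFc.stronglyMeasurableAtFilter _ _) hFc.continuousAt
  have hGc : Continuous (fun v => ∫ u in v..1, (p8f u 1) ^ (-(1 : ℝ) / 2)) :=
    continuous_iff_continuousAt.2 fun v => (hGd v).continuousAt
  have hgc : Continuous g := by
    rw [funext hg]
    exact Continuous.rpow_const (by fun_prop) (fun _ => Or.inr (by norm_num))
  have hpd : ∀ u, HasDerivAt (fun u => p8f u 1) (8 * u ^ 7 + 56 * u ^ 3) u := by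
    intro u
    unfold p8f
    have := ((hasDerivAt_pow 8 u).add (((hasDerivAt_pow 4 u).const_mul 14).mul_const (1 ^ 4))).add_const (1 ^ 8)
    refine HasDerivAt.congr_deriv this ?_
    norm_num; ring
  have hhd : ∀ u, HasDerivAt (fun u => (p8f u 1) ^ ((1 : ℝ) / 4))
      ((8 * u ^ 7 + 56 * u ^ 3) * (1 / 4) * (p8f u 1) ^ ((1 : ℝ) / 4 - 1)) u := fun u =>
    (hpd u).rpow_const (Or.inl (p8f_pos u).ne')
  have hhc : Continuous (fun u : ℝ =>
      (8 * u ^ 7 + 56 * u ^ 3) * (1 / 4) * (p8f u 1) ^ ((1 : ℝ) / 4 - 1)) :=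
    Continuous.mul (by fun_prop) (rpow_cont _)
  have hsub := intervalIntegral.integral_comp_mul_deriv (a := 0) (b := 1)
    (g := fun t => ∫ u in g t..1, (p8f u 1) ^ (-(1 : ℝ) / 2))
    (fun x _ => hhd x) hhc.continuousOn (hGc.comp hgc)
  have e0 : (p8f 0 1) ^ ((1 : ℝ) / 4) = 1 := by norm_num [p8f]
  have e1 : (p8f 1 1) ^ ((1 : ℝ) / 4) = 2 := by
    rw [show p8f 1 1 = (2 : ℝ) ^ (4 : ℝ) by norm_num [p8f], ← Real.rpow_mul (by norm_num)]
    norm_num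
  rw [e0, e1] at hsub
  rw [← hsub]
  have hparts := intervalIntegral.integral_mul_deriv_eq_deriv_mul (a := 0) (b := 1)
    (fun x _ => hGd x) (fun x _ => hhd x) (hFc.neg.intervalIntegrable _ _)
    (hhc.intervalIntegrable _ _)
  have hc : (∫ x in (0 : ℝ)..1, ((fun t => ∫ u in g t..1, (p8f u 1) ^ (-(1 : ℝ) / 2)) ∘
        fun u => (p8f u 1) ^ ((1 : ℝ) / 4)) x *
        ((8 * x ^ 7 + 56 * x ^ 3) * (1 / 4) * (p8f x 1) ^ ((1 : ℝ) / 4 - 1))) =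
      ∫ x in (0 : ℝ)..1, (∫ u in x..1, (p8f u 1) ^ (-(1 : ℝ) / 2)) *
        ((8 * x ^ 7 + 56 * x ^ 3) * (1 / 4) * (p8f x 1) ^ ((1 : ℝ) / 4 - 1)) := by
    apply intervalIntegral.integral_congr
    intro x hx
    rw [Set.uIcc_of_le zero_le_one] at hx
    simp only [Function.comp]
    rw [hg, g_inv x hx.1]
  rw [hc, hparts, e0, intervalIntegral.integral_same]
  have hd : (∫ x in (0 : ℝ)..1, -(p8f x 1) ^ (-(1 : ℝ) / 2) * (p8f x 1) ^ ((1 : ℝ) / 4)) =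
      - ∫ x in (0 : ℝ)..1, (p8f x 1) ^ (-(1 : ℝ) / 4) := by
    rw [← intervalIntegral.integral_neg]
    congr 1
    ext x
    rw [neg_mul, ← Real.rpow_add (p8f_pos x)]
    norm_num
  rw [hd]; ring

theorem stmt18 (β α₃ α₄ : ℝ) (g : ℝ → ℝ)
    (hβ : β = (1 / 2) * ∫ θ in (π / 4)..(π / 2),
      (p8f 1 (Real.tan θ)) ^ (-(1 : ℝ) / 4) * (Real.cos θ) ^ (-(2 : ℝ)))
    (hg : ∀ t, g t = (Real.sqrt (t ^ 4 + 48) - 7) ^ ((1 : ℝ) / 4))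
    (hα₃ : α₃ = ∫ u in (0 : ℝ)..1, 1 / Real.sqrt (p8f u 1))
    (hα₄ : α₄ = ∫ t in (1 : ℝ)..2, ∫ u in g t..1, 1 / Real.sqrt (p8f u 1)) :
    2 * β = α₃ + α₄ := by
  simp only [sqrt_eq_rp] at hα₃ hα₄
  rw [alpha_aux g hg] at hα₄
  rw [beta_aux] at hβ
  rw [hβ, hα₃, hα₄]
  ring
end
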